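/- arXiv:1108.4980 — 3 statements merged into one kernel-verified Lean document; each statement's English description precedes it below -/
import Mathlib

section
/- Let q ∈ (0,1) be real and set v = −q · χ³(q)/χ⁹(q³) (so that v = u³ where u = −q^{1/3} χ(q)/χ³(q³)). Then ( χ(q³) / χ³(q) )³ = (1 + v) / (1 − 8v). -/
/-- Ramanujan's theta function `χ(q) = ∏_{m=0}^∞ (1 + q^{2m+1})`. -/
noncomputable def chi (q : ℝ) : ℝ := ∏' m : ℕ, (1 + q ^ (2 * m + 1))

open Filter Topology

theorem weber_alg (q a b e c d f : ℝ) (hq : 0 < q) (ha : 0 < a) (hc : 0 < c)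
    (h1 : a * b * e = 1) (h2 : c * d * f = 1)
    (h3 : a ^ 8 = b ^ 8 + 16 * q * e ^ 8) (h4 : c ^ 8 = d ^ 8 + 16 * q ^ 3 * f ^ 8)
    (h5 : a ^ 2 * c ^ 2 = b ^ 2 * d ^ 2 + 4 * q * (e ^ 2 * f ^ 2)) :
    q * a ^ 12 + c ^ 12 + 8 * q * (a ^ 3 * c ^ 3) = a ^ 9 * c ^ 9 := by
  obtain ⟨Z, hZ⟩ : ∃ Z, Z = a ^ 2 * c ^ 2 := ⟨_, rfl⟩
  obtain ⟨X, hX⟩ : ∃ X, X = b ^ 2 * d ^ 2 := ⟨_, rfl⟩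
  obtain ⟨Y, hY⟩ : ∃ Y, Y = 4 * q * (e ^ 2 * f ^ 2) := ⟨_, rfl⟩
  have hZpos : 0 < Z := by rw [hZ]; positivity
  have hXYZ : X * Y * Z = 4 * q := by
    have : X * Y * Z = 4 * q * (a * b * e) ^ 2 * (c * d * f) ^ 2 := by
      rw [hX, hY, hZ]; ring
    rw [this, h1, h2]; ring
  have hsum : Z = X + Y := by rw [hZ, hX, hY]; exact h5
  obtain ⟨p, hp⟩ : ∃ p, p = b ^ 8 := ⟨_, rfl⟩
  obtain ⟨r, hr⟩ : ∃ r, r = 16 * q * e ^ 8 := ⟨_, rfl⟩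
  obtain ⟨s, hs⟩ : ∃ s, s = a ^ 8 := ⟨_, rfl⟩
  obtain ⟨p', hp'⟩ : ∃ p, p = d ^ 8 := ⟨_, rfl⟩
  obtain ⟨r', hr'⟩ : ∃ r, r = 16 * q ^ 3 * f ^ 8 := ⟨_, rfl⟩
  obtain ⟨s', hs'⟩ : ∃ s, s = c ^ 8 := ⟨_, rfl⟩
  have e1 : p * r * s = 16 * q := by
    have : p * r * s = 16 * q * (a * b * e) ^ 8 := by rw [hp, hr, hs]; ring
    rw [this, h1]; ring
  have e2 : p' * r' * s' = 16 * q ^ 3 := by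
    have : p' * r' * s' = 16 * q ^ 3 * (c * d * f) ^ 8 := by rw [hp', hr', hs']; ring
    rw [this, h2]; ring
  have e3 : s = p + r := by rw [hs, hp, hr]; exact h3
  have e4 : s' = p' + r' := by rw [hs', hp', hr']; exact h4
  have e5 : X ^ 4 = p * p' := by rw [hX, hp, hp']; ring
  have e6 : Y ^ 4 = r * r' := by rw [hY, hr, hr']; ring
  have e7 : Z ^ 4 = s * s' := by rw [hZ, hs, hs']; ring
  have k1 : Z ^ 2 * (2 * (X ^ 4 + Y ^ 4) - Z ^ 4) = Z ^ 6 - 32 * q * Z ^ 3 + 64 * q ^ 2 := by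
    have : X ^ 4 + Y ^ 4 = (X + Y) ^ 4 - 4 * (X * Y) * (X + Y) ^ 2 + 2 * (X * Y) ^ 2 := by ring
    rw [this, ← hsum]
    have : Z ^ 2 * (2 * (Z ^ 4 - 4 * (X * Y) * Z ^ 2 + 2 * (X * Y) ^ 2) - Z ^ 4)
      = Z ^ 6 - 8 * (X * Y * Z) * Z ^ 3 + 4 * (X * Y * Z) ^ 2 := by ring
    rw [this, hXYZ]; ring
  have k2 : 2 * (X ^ 4 + Y ^ 4) - Z ^ 4 = (p - r) * (p' - r') := by
    rw [e5, e6, e7, e3, e4]; ring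
  have k3 : s * (p - r) ^ 2 = s ^ 3 - 64 * q := by
    have : s * (p - r) ^ 2 = s * (p + r) ^ 2 - 4 * (p * r * s) := by ring
    rw [this, e1, ← e3]; ring
  have k4 : s' * (p' - r') ^ 2 = s' ^ 3 - 64 * q ^ 3 := by
    have : s' * (p' - r') ^ 2 = s' * (p' + r') ^ 2 - 4 * (p' * r' * s') := by ring
    rw [this, e2, ← e4]; ring
  have k5 : (Z ^ 6 - 32 * q * Z ^ 3 + 64 * q ^ 2) ^ 2 = (s ^ 3 - 64 * q) * (s' ^ 3 - 64 * q ^ 3) := by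
    rw [← k1, ← k3, ← k4, k2]
    have : (Z ^ 2 * ((p - r) * (p' - r'))) ^ 2 = Z ^ 4 * ((p - r) * (p' - r')) ^ 2 := by ring
    rw [this, e7]; ring
  have k6 : q ^ 2 * s ^ 3 + s' ^ 3 = Z ^ 9 - 18 * q * Z ^ 6 + 64 * q ^ 2 * Z ^ 3 := by
    have h12 : Z ^ 12 = s ^ 3 * s' ^ 3 := by
      have : Z ^ 12 = (Z ^ 4) ^ 3 := by ring
      rw [this, e7]; ring
    have : q * (q ^ 2 * s ^ 3 + s' ^ 3) = q * (Z ^ 9 - 18 * q * Z ^ 6 + 64 * q ^ 2 * Z ^ 3) := by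
      linear_combination (1/64) * k5 - (1/64) * h12
    exact mul_left_cancel₀ hq.ne' this
  have k7 : 16 * q ≤ Z ^ 3 := by
    have : Z ^ 3 = Z * (X - Y) ^ 2 + 4 * (X * Y * Z) := by rw [hsum]; ring
    rw [this, hXYZ]
    have : 0 ≤ Z * (X - Y) ^ 2 := by positivity
    linarith
  have k8 : (q * a ^ 12 + c ^ 12) ^ 2 = (a ^ 3 * c ^ 3 * (Z ^ 3 - 8 * q)) ^ 2 := by
    have t1 : (a ^ 3 * c ^ 3) ^ 2 = Z ^ 3 := by rw [hZ]; ring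
    have t2 : (q * a ^ 12 + c ^ 12) ^ 2 = q ^ 2 * s ^ 3 + s' ^ 3 + 2 * q * Z ^ 6 := by
      rw [hs, hs', hZ]; ring
    rw [t2, k6, mul_pow, t1]; ring
  have k9 : q * a ^ 12 + c ^ 12 = a ^ 3 * c ^ 3 * (Z ^ 3 - 8 * q) := by
    have : 0 ≤ Z ^ 3 - 8 * q := by linarith
    exact (pow_left_inj₀ (by positivity) (by positivity) two_ne_zero).1 k8
  rw [k9, hZ]; ring

/-! ### Jacobi triple product -/

noncomputable def poch (Q : ℝ) (n : ℕ) : ℝ := ∏ i ∈ Finset.range n, (1 - Q ^ (i + 1))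

noncomputable def einv (Q : ℝ) (k : ℤ) : ℝ := if k < 0 then 0 else (poch Q k.toNat)⁻¹

theorem poch_pos {Q : ℝ} (h0 : 0 < Q) (h1 : Q < 1) (n : ℕ) : 0 < poch Q n :=
  Finset.prod_pos fun i _ => sub_pos.2 (pow_lt_one₀ h0.le h1 (by simp))

theorem poch_le_one {Q : ℝ} (h0 : 0 < Q) (h1 : Q < 1) (n : ℕ) : poch Q n ≤ 1 :=
  Finset.prod_le_one (fun i _ => (sub_pos.2 (pow_lt_one₀ h0.le h1 (by simp))).le)
    (fun i _ => by have := pow_pos h0 (i+1); linarith)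

theorem einv_rec {Q : ℝ} (h0 : 0 < Q) (h1 : Q < 1) (k : ℤ) :
    einv Q k = (1 - Q ^ (k + 1)) * einv Q (k + 1) := by
  unfold einv
  rcases lt_trichotomy k (-1) with h | h | h
  · rw [if_pos (by omega), if_pos (by omega)]; simp
  · subst h; simp
  · obtain ⟨n, rfl⟩ := Int.eq_ofNat_of_zero_le (show 0 ≤ k by omega)
    rw [if_neg (by omega), if_neg (by omega)]
    have e : ((n : ℤ) + 1).toNat = n + 1 := by omega
    rw [e, Int.toNat_natCast]
    have := poch_pos h0 h1 n
    have h2 := poch_pos h0 h1 (n + 1)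
    have h3 : poch Q (n + 1) = poch Q n * (1 - Q ^ (n + 1)) := Finset.prod_range_succ _ _
    have h4 : (Q : ℝ) ^ ((n : ℤ) + 1) = Q ^ (n + 1) := by exact_mod_cast zpow_natCast Q (n + 1)
    rw [h4]
    have h5 : (1 - Q ^ (n + 1)) ≠ 0 := (sub_pos.2 (pow_lt_one₀ h0.le h1 (by simp))).ne'
    rw [h3]; field_simp

theorem einv_nonneg {Q : ℝ} (h0 : 0 < Q) (h1 : Q < 1) (k : ℤ) : 0 ≤ einv Q k := by
  unfold einv; split_ifs
  · rfl
  · exact (inv_pos.2 (poch_pos h0 h1 _)).le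

theorem mult_one_sub {Q : ℝ} (h0 : 0 < Q) (h1 : Q < 1) :
    Multipliable (fun i : ℕ => 1 - Q ^ (i + 1)) := by
  have := multipliable_one_add_of_summable (f := fun n : ℕ => -Q ^ (n + 1)) (by
    simp only [norm_neg, norm_pow, Real.norm_eq_abs, abs_of_pos h0]
    exact (summable_nat_add_iff 1).2 (summable_geometric_of_lt_one h0.le h1))
  simpa [sub_eq_add_neg] using this

noncomputable def pinf (Q : ℝ) : ℝ := ∏' i : ℕ, (1 - Q ^ (i + 1))

theorem pinf_ne {Q : ℝ} (h0 : 0 < Q) (h1 : Q < 1) : pinf Q ≠ 0 := by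
  have := tprod_one_add_ne_zero_of_summable (f := fun n : ℕ => -Q ^ (n + 1))
    (fun i => by
      have : Q ^ (i+1) < 1 := pow_lt_one₀ h0.le h1 (by simp)
      intro h; linarith) (by
    simp only [norm_neg, norm_pow, Real.norm_eq_abs, abs_of_pos h0]
    exact (summable_nat_add_iff 1).2 (summable_geometric_of_lt_one h0.le h1))
  simpa [sub_eq_add_neg, pinf] using this

theorem poch_tendsto {Q : ℝ} (h0 : 0 < Q) (h1 : Q < 1) :
    Tendsto (poch Q) atTop (𝓝 (pinf Q)) := (mult_one_sub h0 h1).hasProd.tendsto_prod_nat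

theorem einv_bdd {Q : ℝ} (h0 : 0 < Q) (h1 : Q < 1) : ∃ M, 0 ≤ M ∧ ∀ k, einv Q k ≤ M := by
  obtain ⟨M, hM⟩ := ((poch_tendsto h0 h1).inv₀ (pinf_ne h0 h1)).bddAbove_range
  refine ⟨max M 0, le_max_right _ _, fun k => ?_⟩
  unfold einv; split_ifs
  · exact le_max_right _ _
  · exact le_max_of_le_left (hM ⟨_, rfl⟩)

theorem einv_tendsto {Q : ℝ} (h0 : 0 < Q) (h1 : Q < 1) (j : ℤ) :
    Tendsto (fun n : ℕ => einv Q ((n : ℤ) + j)) atTop (𝓝 (pinf Q)⁻¹) := by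
  have h := ((poch_tendsto h0 h1).inv₀ (pinf_ne h0 h1))
  have h2 : Tendsto (fun n : ℕ => ((n : ℤ) + j).toNat) atTop atTop := by
    refine tendsto_atTop.2 fun b => ?_
    filter_upwards [eventually_ge_atTop (b + j.natAbs)] with n hn
    omega
  refine (h.comp h2).congr' ?_
  filter_upwards [eventually_ge_atTop (j.natAbs)] with n hn
  simp only [Function.comp, einv]
  rw [if_neg (by omega)]

noncomputable def jco (Q : ℝ) (n : ℕ) (j : ℤ) : ℝ :=
  poch Q (2 * n) * (einv Q (n - j) * einv Q (n + j))

theorem jco_rec {Q : ℝ} (h0 : 0 < Q) (h1 : Q < 1) (n : ℕ) (j : ℤ) :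
    jco Q (n + 1) j = (1 + Q ^ (2 * n + 1)) * jco Q n j + Q ^ (n + 1 - j : ℤ) * jco Q n (j - 1)
      + Q ^ (n + 1 + j : ℤ) * jco Q n (j + 1) := by
  unfold jco
  have hp : poch Q (2 * (n + 1)) = poch Q (2 * n) * (1 - Q ^ (2 * n + 1)) * (1 - Q ^ (2 * n + 2)) := by
    rw [show 2 * (n + 1) = 2 * n + 1 + 1 by ring]
    simp only [poch]
    rw [Finset.prod_range_succ, Finset.prod_range_succ]
  have a1 := einv_rec h0 h1 (n - j)
  have a2 := einv_rec h0 h1 (n - j - 1)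
  have b1 := einv_rec h0 h1 (n + j)
  have b2 := einv_rec h0 h1 (n + j - 1)
  rw [show (n - j - 1 + 1 : ℤ) = n - j by ring] at a2
  rw [show (n + j - 1 + 1 : ℤ) = n + j by ring] at b2
  rw [hp, Nat.cast_succ, show ((n : ℤ) + 1 - j) = n - j + 1 by ring,
    show ((n : ℤ) + 1 + j) = n + j + 1 by ring, show ((n : ℤ) - (j - 1)) = n - j + 1 by ring,
    show ((n : ℤ) + (j - 1)) = n + j - 1 by ring, show ((n : ℤ) - (j + 1)) = n - j - 1 by ring,
    show ((n : ℤ) + (j + 1)) = n + j + 1 by ring, a2, b2, a1, b1]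
  have x1 : Q ^ (n - j + 1 : ℤ) = Q * Q ^ (n - j : ℤ) := by rw [zpow_add_one₀ h0.ne']; ring
  have y1 : Q ^ (n + j + 1 : ℤ) = Q * Q ^ (n + j : ℤ) := by rw [zpow_add_one₀ h0.ne']; ring
  have xy : Q ^ (2 * n) = Q ^ (n - j : ℤ) * Q ^ (n + j : ℤ) := by
    rw [← zpow_add₀ h0.ne', ← zpow_natCast]; congr 1; push_cast; ring
  rw [pow_add Q (2 * n) 1, pow_add Q (2 * n) 2, x1, y1, xy]
  ring

theorem jtp_fin {q : ℝ} (h0 : 0 < q) (h1 : q < 1) (z : ℝ) (hz : z ≠ 0) (n : ℕ) :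
    HasSum (fun j : ℤ => jco (q ^ 2) n j * (z ^ j * q ^ (j ^ 2)))
      (∏ k ∈ Finset.range n, ((1 + z * q ^ (2 * k + 1)) * (1 + z⁻¹ * q ^ (2 * k + 1)))) := by
  have hQ0 : 0 < q ^ 2 := by positivity
  have hQ1 : q ^ 2 < 1 := pow_lt_one₀ h0.le h1 (by simp)
  induction n with
  | zero =>
    have := hasSum_single (f := fun j : ℤ => jco (q ^ 2) 0 j * (z ^ j * q ^ (j ^ 2))) 0 (by
      intro j hj
      have : einv (q ^ 2) (0 - j) * einv (q ^ 2) (0 + j) = 0 := by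
        rcases lt_or_gt_of_ne hj with h | h
        · simp [einv, h]
        · simp [einv, h]
      simp [jco] at this ⊢
      tauto)
    simpa [jco, einv, poch] using this
  | succ n ih =>
    rw [Finset.prod_range_succ]
    have s0 := ih.mul_left (1 + (q ^ 2) ^ (2 * n + 1))
    have s1 := ((Equiv.subRight (1 : ℤ)).hasSum_iff.2 ih).mul_left (z * q ^ (2 * n + 1))
    have s2 := ((Equiv.addRight (1 : ℤ)).hasSum_iff.2 ih).mul_left (z⁻¹ * q ^ (2 * n + 1))
    convert (s0.add s1).add s2 using 1
    · rfl
    · funext j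
      simp only [Function.comp, Equiv.subRight_apply, Equiv.coe_addRight]
      rw [jco_rec hQ0 hQ1]
      have c1 : (q ^ 2) ^ (n + 1 - j : ℤ) * q ^ (j ^ 2) = q ^ (2 * n + 1) * q ^ ((j - 1) ^ 2) := by
        rw [← zpow_natCast q 2, ← zpow_mul, ← zpow_natCast q (2 * n + 1), ← zpow_add₀ h0.ne',
          ← zpow_add₀ h0.ne']
        congr 1; push_cast; ring
      have c2 : (q ^ 2) ^ (n + 1 + j : ℤ) * q ^ (j ^ 2) = q ^ (2 * n + 1) * q ^ ((j + 1) ^ 2) := by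
        rw [← zpow_natCast q 2, ← zpow_mul, ← zpow_natCast q (2 * n + 1), ← zpow_add₀ h0.ne',
          ← zpow_add₀ h0.ne']
        congr 1; push_cast; ring
      have z1 : z * z ^ (j - 1) = z ^ j := by
        rw [zpow_sub_one₀ hz]; field_simp
      have z2 : z⁻¹ * z ^ (j + 1) = z ^ j := by
        rw [zpow_add_one₀ hz]; field_simp
      linear_combination (jco (q ^ 2) n (j - 1) * z ^ j) * c1 + (jco (q ^ 2) n (j + 1) * z ^ j) * c2
        - (jco (q ^ 2) n (j - 1) * q ^ (2 * n + 1) * q ^ ((j - 1) ^ 2)) * z1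
        - (jco (q ^ 2) n (j + 1) * q ^ (2 * n + 1) * q ^ ((j + 1) ^ 2)) * z2
    · have : z * z⁻¹ = 1 := mul_inv_cancel₀ hz
      linear_combination (∏ k ∈ Finset.range n, ((1 + z * q ^ (2 * k + 1)) * (1 + z⁻¹ * q ^ (2 * k + 1)))) * (q ^ (2 * n + 1)) ^ 2 * this

theorem jtp {q : ℝ} (h0 : 0 < q) (h1 : q < 1) (z : ℝ) (hz : z ≠ 0)
    (hs : Summable (fun j : ℤ => |z ^ j * q ^ (j ^ 2)|)) {u w : ℝ}
    (hu : HasProd (fun k : ℕ => 1 + z * q ^ (2 * k + 1)) u)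
    (hw : HasProd (fun k : ℕ => 1 + z⁻¹ * q ^ (2 * k + 1)) w) :
    ∑' j : ℤ, z ^ j * q ^ (j ^ 2) = pinf (q ^ 2) * (u * w) := by
  have hQ0 : 0 < q ^ 2 := by positivity
  have hQ1 : q ^ 2 < 1 := pow_lt_one₀ h0.le h1 (by simp)
  obtain ⟨M, hM0, hM⟩ := einv_bdd hQ0 hQ1
  have t1 : Tendsto (fun n : ℕ => ∑' j : ℤ, jco (q ^ 2) n j * (z ^ j * q ^ (j ^ 2))) atTop
      (𝓝 (∑' j : ℤ, (pinf (q ^ 2))⁻¹ * (z ^ j * q ^ (j ^ 2)))) := by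
    refine tendsto_tsum_of_dominated_convergence (hs.mul_left (M * M)) ?_ ?_
    · intro j
      refine Tendsto.mul_const _ ?_
      have a := (poch_tendsto hQ0 hQ1).comp (tendsto_id.const_mul_atTop' (show 0 < 2 by norm_num))
      have b := einv_tendsto hQ0 hQ1 (-j)
      have c := einv_tendsto hQ0 hQ1 j
      have := a.mul (b.mul c)
      rw [mul_inv_cancel_left₀ (pinf_ne hQ0 hQ1)] at this
      exact this
    · refine Eventually.of_forall fun n j => ?_
      rw [norm_mul, Real.norm_eq_abs, Real.norm_eq_abs]
      refine mul_le_mul_of_nonneg_right ?_ (abs_nonneg _)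
      have p0 := einv_nonneg hQ0 hQ1 (n - j)
      have p1 := einv_nonneg hQ0 hQ1 (n + j)
      have p2 := (poch_pos hQ0 hQ1 (2 * n)).le
      rw [jco, abs_of_nonneg (by positivity)]
      calc _ ≤ 1 * (M * M) := by
            gcongr
            · exact poch_le_one hQ0 hQ1 _
            · exact hM _
            · exact hM _
        _ = _ := one_mul _
  have t2 := (hu.mul hw).tendsto_prod_nat
  have t3 := tendsto_nhds_unique t1 (t2.congr fun n => (jtp_fin h0 h1 z hz n).tsum_eq.symm)
  rw [tsum_mul_left] at t3
  rw [← t3, mul_inv_cancel_left₀ (pinf_ne hQ0 hQ1)]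

/-! ### Theta series -/

noncomputable def paritySplit : (ℤ × ℤ) ⊕ (ℤ × ℤ) ≃ ℤ × ℤ where
  toFun := Sum.elim (fun p => (p.1 + p.2, p.1 - p.2)) (fun p => (p.1 + p.2 + 1, p.1 - p.2))
  invFun p := if (p.1 + p.2) % 2 = 0 then Sum.inl ((p.1 + p.2) / 2, (p.1 - p.2) / 2)
    else Sum.inr ((p.1 + p.2 - 1) / 2, (p.1 - p.2 - 1) / 2)
  left_inv := by
    rintro (⟨a, b⟩ | ⟨a, b⟩)
    · have h : (a + b + (a - b)) % 2 = 0 := by omega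
      refine (if_pos h).trans ?_
      congr 2 <;> simp only [Sum.elim_inl] <;> omega
    · have h : ¬ (a + b + 1 + (a - b)) % 2 = 0 := by omega
      refine (if_neg h).trans ?_
      congr 2 <;> simp only [Sum.elim_inr] <;> omega
  right_inv := by
    rintro ⟨a, b⟩
    dsimp only
    split_ifs with h
    · simp only [Sum.elim_inl]
      ext <;> dsimp only <;> omega
    · simp only [Sum.elim_inr]
      ext <;> dsimp only <;> omega

theorem tsum_split (F : ℤ × ℤ → ℝ) (hF : Summable F) :
    ∑' p, F p = ∑' p : ℤ × ℤ, F (p.1 + p.2, p.1 - p.2)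
      + ∑' p : ℤ × ℤ, F (p.1 + p.2 + 1, p.1 - p.2) := by
  have h := paritySplit.summable_iff.2 hF
  rw [← paritySplit.tsum_eq F]
  have h1 : Summable ((F ∘ paritySplit) ∘ Sum.inl) := h.comp_injective Sum.inl_injective
  have h2 : Summable ((F ∘ paritySplit) ∘ Sum.inr) := h.comp_injective Sum.inr_injective
  exact (HasSum.sum h1.hasSum h2.hasSum).tsum_eq

noncomputable def t3 (q : ℝ) : ℝ := ∑' j : ℤ, q ^ (j ^ 2)
noncomputable def t4 (q : ℝ) : ℝ := ∑' j : ℤ, (-1) ^ j * q ^ (j ^ 2)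
noncomputable def t2 (q : ℝ) : ℝ := ∑' j : ℤ, q ^ (j ^ 2 + j)

theorem summ_abs {q : ℝ} (h0 : 0 < q) (h1 : q < 1) : Summable (fun j : ℤ => q ^ (j.natAbs)) := by
  refine Summable.of_nat_of_neg ?_ ?_ <;> simpa using summable_geometric_of_lt_one h0.le h1

theorem summ3 {q : ℝ} (h0 : 0 < q) (h1 : q < 1) : Summable (fun j : ℤ => q ^ (j ^ 2)) := by
  refine Summable.of_nonneg_of_le (fun j => by positivity) (fun j => ?_) (summ_abs h0 h1)
  rw [← zpow_natCast]
  refine zpow_le_zpow_right_of_le_one₀ h0 h1.le ?_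
  rw [Int.natCast_natAbs, ← sq_abs]
  have := abs_nonneg j
  rcases this.eq_or_lt with h | h
  · rw [← h]; norm_num
  · nlinarith

theorem summ2 {q : ℝ} (h0 : 0 < q) (h1 : q < 1) : Summable (fun j : ℤ => q ^ (j ^ 2 + j)) := by
  refine Summable.of_nonneg_of_le (fun j => by positivity) (fun j => ?_)
    ((summ_abs h0 h1).mul_left q⁻¹)
  rw [← zpow_natCast, ← zpow_neg_one, ← zpow_add₀ h0.ne']
  refine zpow_le_zpow_right_of_le_one₀ h0 h1.le ?_
  rw [Int.natCast_natAbs]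
  rcases abs_cases j with ⟨h, h'⟩ | ⟨h, h'⟩ <;> rw [h] <;> nlinarith

theorem abs4 {q : ℝ} (h0 : 0 < q) (j : ℤ) : |(-1 : ℝ) ^ j * q ^ (j ^ 2)| = q ^ (j ^ 2) := by
  rw [abs_mul, abs_zpow, abs_neg, abs_one, one_zpow, one_mul, abs_of_pos (by positivity)]

theorem norm3 {q : ℝ} (h0 : 0 < q) (h1 : q < 1) : Summable (fun j : ℤ => ‖q ^ (j ^ 2)‖) :=
  (summ3 h0 h1).norm
theorem norm2 {q : ℝ} (h0 : 0 < q) (h1 : q < 1) : Summable (fun j : ℤ => ‖q ^ (j ^ 2 + j)‖) :=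
  (summ2 h0 h1).norm
theorem norm4 {q : ℝ} (h0 : 0 < q) (h1 : q < 1) :
    Summable (fun j : ℤ => ‖(-1 : ℝ) ^ j * q ^ (j ^ 2)‖) := by
  simp only [Real.norm_eq_abs, abs4 h0]; exact summ3 h0 h1

theorem prodsplit {f g : ℤ → ℝ} (hf : Summable fun j => ‖f j‖) (hg : Summable fun j => ‖g j‖) :
    (∑' j, f j) * (∑' j, g j) = ∑' p : ℤ × ℤ, f (p.1 + p.2) * g (p.1 - p.2)
      + ∑' p : ℤ × ℤ, f (p.1 + p.2 + 1) * g (p.1 - p.2) := by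
  rw [tsum_mul_tsum_of_summable_norm hf hg,
    tsum_split _ (summable_mul_of_summable_norm hf hg)]

theorem neg_one_even (a b : ℤ) : (-1 : ℝ) ^ (a + b) * (-1) ^ (a - b) = 1 := by
  rw [← zpow_add₀ (by norm_num), show a + b + (a - b) = 2 * a by ring, zpow_mul]; norm_num

theorem neg_one_odd (a b : ℤ) : (-1 : ℝ) ^ (a + b + 1) * (-1) ^ (a - b) = -1 := by
  rw [zpow_add_one₀ (by norm_num)]
  linear_combination - neg_one_even a b

theorem sqz {q : ℝ} (k : ℤ) : (q ^ 2) ^ k = q ^ (2 * k) := by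
  rw [zpow_mul]; norm_cast
theorem cubez {q : ℝ} (k : ℤ) : (q ^ 3) ^ k = q ^ (3 * k) := by
  rw [zpow_mul]; norm_cast

theorem t3_sq {q : ℝ} (h0 : 0 < q) (h1 : q < 1) :
    t3 q ^ 2 = t3 (q ^ 2) ^ 2 + q * t2 (q ^ 2) ^ 2 := by
  have hQ0 : 0 < q ^ 2 := by positivity
  have hQ1 : q ^ 2 < 1 := pow_lt_one₀ h0.le h1 (by simp)
  rw [sq (t3 q), sq (t3 (q ^ 2)), sq (t2 (q ^ 2)), t3, prodsplit (norm3 h0 h1) (norm3 h0 h1), t3, t2,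
    tsum_mul_tsum_of_summable_norm (norm3 hQ0 hQ1) (norm3 hQ0 hQ1),
    tsum_mul_tsum_of_summable_norm (norm2 hQ0 hQ1) (norm2 hQ0 hQ1), ← tsum_mul_left]
  congr 1
  · refine tsum_congr fun p => ?_
    rw [sqz, sqz, ← zpow_add₀ h0.ne', ← zpow_add₀ h0.ne']
    congr 1; ring
  · refine tsum_congr fun p => ?_
    rw [sqz, sqz, ← zpow_add₀ h0.ne', ← zpow_add₀ h0.ne', ← zpow_one_add₀ h0.ne']
    congr 1; ring

theorem t4_sq {q : ℝ} (h0 : 0 < q) (h1 : q < 1) :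
    t4 q ^ 2 = t3 (q ^ 2) ^ 2 - q * t2 (q ^ 2) ^ 2 := by
  have hQ0 : 0 < q ^ 2 := by positivity
  have hQ1 : q ^ 2 < 1 := pow_lt_one₀ h0.le h1 (by simp)
  rw [sq (t4 q), sq (t3 (q ^ 2)), sq (t2 (q ^ 2)), t4, prodsplit (norm4 h0 h1) (norm4 h0 h1), t3, t2,
    tsum_mul_tsum_of_summable_norm (norm3 hQ0 hQ1) (norm3 hQ0 hQ1),
    tsum_mul_tsum_of_summable_norm (norm2 hQ0 hQ1) (norm2 hQ0 hQ1), ← tsum_mul_left, sub_eq_add_neg,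
    ← tsum_neg]
  congr 1
  · refine tsum_congr fun p => ?_
    rw [mul_mul_mul_comm, neg_one_even, one_mul,
      sqz, sqz, ← zpow_add₀ h0.ne', ← zpow_add₀ h0.ne']
    congr 1; ring
  · refine tsum_congr fun p => ?_
    rw [mul_mul_mul_comm, neg_one_odd, neg_one_mul,
      sqz, sqz, ← zpow_add₀ h0.ne', ← zpow_add₀ h0.ne', ← zpow_one_add₀ h0.ne']
    congr 2; ring

theorem t2_sq {q : ℝ} (h0 : 0 < q) (h1 : q < 1) :
    t2 q ^ 2 = 2 * (t2 (q ^ 2) * t3 (q ^ 2)) := by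
  have hQ0 : 0 < q ^ 2 := by positivity
  have hQ1 : q ^ 2 < 1 := pow_lt_one₀ h0.le h1 (by simp)
  rw [two_mul]
  nth_rewrite 2 [mul_comm]
  rw [sq, t2, prodsplit (norm2 h0 h1) (norm2 h0 h1), t3, t2]
  congr 1
  · rw [tsum_mul_tsum_of_summable_norm (norm2 hQ0 hQ1) (norm3 hQ0 hQ1)]
    refine tsum_congr fun p => ?_
    rw [sqz, sqz, ← zpow_add₀ h0.ne', ← zpow_add₀ h0.ne']
    congr 1; ring
  · have hn : Summable (fun j : ℤ => ‖(q ^ 2) ^ ((j + 1) ^ 2)‖) := by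
      have := (norm3 hQ0 hQ1).comp_injective (i := fun j : ℤ => j + 1) (add_left_injective 1)
      simp only [Function.comp_def] at this
      exact this
    rw [← (Equiv.addRight (1 : ℤ)).tsum_eq (fun j : ℤ => (q ^ 2) ^ (j ^ 2))]
    simp only [Equiv.coe_addRight]
    rw [tsum_mul_tsum_of_summable_norm hn (norm2 hQ0 hQ1)]
    refine tsum_congr fun p => ?_
    rw [sqz, sqz, ← zpow_add₀ h0.ne', ← zpow_add₀ h0.ne']
    congr 1; ring

theorem jacobi_quartic {q : ℝ} (h0 : 0 < q) (h1 : q < 1) :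
    t3 q ^ 4 = t4 q ^ 4 + q * t2 q ^ 4 := by
  have e : ∀ x : ℝ, x ^ 4 = (x ^ 2) ^ 2 := fun x => by ring
  rw [e, e, e, t3_sq h0 h1, t4_sq h0 h1, t2_sq h0 h1]; ring

def shearA : ℤ × ℤ ≃ ℤ × ℤ where
  toFun p := (p.1, p.1 - p.2)
  invFun p := (p.1, p.1 - p.2)
  left_inv p := by simp
  right_inv p := by simp

def shearB : ℤ × ℤ ≃ ℤ × ℤ where
  toFun p := (p.2, p.2 - p.1 - 1)
  invFun p := (p.1 - p.2 - 1, p.1)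
  left_inv p := by ext <;> dsimp only <;> omega
  right_inv p := by ext <;> dsimp only <;> omega

theorem legendre3 {q : ℝ} (h0 : 0 < q) (h1 : q < 1) :
    t3 q * t3 (q ^ 3) = t4 q * t4 (q ^ 3) + q * (t2 q * t2 (q ^ 3)) := by
  have hQ0 : 0 < q ^ 3 := by positivity
  have hQ1 : q ^ 3 < 1 := pow_lt_one₀ h0.le h1 (by simp)
  have a3 := prodsplit (norm3 h0 h1) (norm3 hQ0 hQ1)
  have a4 := prodsplit (norm4 h0 h1) (norm4 hQ0 hQ1)
  have a2 := prodsplit (norm2 h0 h1) (norm2 hQ0 hQ1)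
  have m1 : ∀ (i j : ℤ) (y w : ℝ), (-1 : ℝ) ^ i * y * ((-1) ^ j * w)
      = ((-1) ^ i * (-1) ^ j) * (y * w) := fun x y z w => by ring
  simp only [m1, neg_one_even, neg_one_odd, one_mul, neg_one_mul, tsum_neg] at a4
  have b1 : q * ∑' p : ℤ × ℤ, q ^ ((p.1 + p.2) ^ 2 + (p.1 + p.2)) *
      (q ^ 3) ^ ((p.1 - p.2) ^ 2 + (p.1 - p.2)) =
      ∑' p : ℤ × ℤ, q ^ ((p.1 + p.2 + 1) ^ 2) * (q ^ 3) ^ ((p.1 - p.2) ^ 2) := by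
    rw [← tsum_mul_left, ← shearA.tsum_eq (fun p : ℤ × ℤ =>
      q ^ ((p.1 + p.2 + 1) ^ 2) * (q ^ 3) ^ ((p.1 - p.2) ^ 2))]
    refine tsum_congr fun p => ?_
    simp only [shearA, Equiv.coe_fn_mk]
    rw [cubez, cubez, ← zpow_add₀ h0.ne', ← zpow_add₀ h0.ne', ← zpow_one_add₀ h0.ne']
    congr 1; ring
  have b2 : q * ∑' p : ℤ × ℤ, q ^ ((p.1 + p.2 + 1) ^ 2 + (p.1 + p.2 + 1)) *
      (q ^ 3) ^ ((p.1 - p.2) ^ 2 + (p.1 - p.2)) =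
      ∑' p : ℤ × ℤ, q ^ ((p.1 + p.2 + 1) ^ 2) * (q ^ 3) ^ ((p.1 - p.2) ^ 2) := by
    rw [← tsum_mul_left, ← shearB.tsum_eq (fun p : ℤ × ℤ =>
      q ^ ((p.1 + p.2 + 1) ^ 2) * (q ^ 3) ^ ((p.1 - p.2) ^ 2))]
    refine tsum_congr fun p => ?_
    simp only [shearB, Equiv.coe_fn_mk]
    rw [cubez, cubez, ← zpow_add₀ h0.ne', ← zpow_add₀ h0.ne', ← zpow_one_add₀ h0.ne']
    congr 1; ring
  rw [t3, t3, t4, t4, t2, t2, a3, a4, a2, mul_add, b1, b2]; ring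

/-! ### Products -/

noncomputable def chim (q : ℝ) : ℝ := ∏' m : ℕ, (1 - q ^ (2 * m + 1))
noncomputable def che (q : ℝ) : ℝ := ∏' m : ℕ, (1 + q ^ (2 * m + 2))

theorem summ_lin {q : ℝ} (h0 : 0 < q) (h1 : q < 1) (c : ℕ) :
    Summable (fun m : ℕ => q ^ (2 * m + c)) := by
  have : ∀ m : ℕ, q ^ (2 * m + c) = (q ^ 2) ^ m * q ^ c := fun m => by rw [pow_add, pow_mul]
  simp only [this]
  exact (summable_geometric_of_lt_one (by positivity)
    (pow_lt_one₀ h0.le h1 (by simp))).mul_right _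

theorem mult_add {q : ℝ} (h0 : 0 < q) (h1 : q < 1) (c : ℕ) :
    Multipliable (fun m : ℕ => 1 + q ^ (2 * m + c)) :=
  multipliable_one_add_of_summable (summ_lin h0 h1 c).norm

theorem mult_sub {q : ℝ} (h0 : 0 < q) (h1 : q < 1) (c : ℕ) :
    Multipliable (fun m : ℕ => 1 - q ^ (2 * m + c)) := by
  simpa [sub_eq_add_neg] using multipliable_one_add_of_summable
    (f := fun m : ℕ => -q ^ (2 * m + c)) (summ_lin h0 h1 c).neg.norm

theorem chi_pos {q : ℝ} (h0 : 0 < q) (h1 : q < 1) : 0 < chi q := by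
  have h : chi q ≠ 0 := tprod_one_add_ne_zero_of_summable (f := fun m : ℕ => q ^ (2 * m + 1))
    (fun i => by positivity) (summ_lin h0 h1 1).norm
  refine lt_of_le_of_ne ?_ h.symm
  exact ge_of_tendsto' (mult_add h0 h1 1).hasProd.tendsto_prod_nat
    (fun n => Finset.prod_nonneg fun i _ => by positivity)

theorem euler_prod {q : ℝ} (h0 : 0 < q) (h1 : q < 1) : chi q * chim q * che q = 1 := by
  have hQ0 : 0 < q ^ 2 := by positivity
  have hQ1 : q ^ 2 < 1 := pow_lt_one₀ h0.le h1 (by simp)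
  have e2 : pinf (q ^ 2) = ∏' m : ℕ, (1 - q ^ (2 * m + 2)) := by
    refine tprod_congr fun m => ?_
    rw [← pow_mul]; ring_nf
  have G : pinf q = chim q * pinf (q ^ 2) := by
    rw [e2, chim, pinf]
    exact (tprod_even_mul_odd (f := fun m : ℕ => 1 - q ^ (m + 1))
      (mult_sub h0 h1 1) (mult_sub h0 h1 2)).symm
  have H := (mult_add h0 h1 1).hasProd.even_mul_odd (f := fun m : ℕ => 1 + q ^ (m + 1))
    (mult_add h0 h1 2).hasProd
  have K := (mult_one_sub h0 h1).hasProd.mul H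
  have L : pinf (q ^ 2) = pinf q * (chi q * che q) := by
    rw [pinf, chi, che, pinf, ← K.tprod_eq]
    refine tprod_congr fun m => ?_
    ring
  rw [G] at L
  have := pinf_ne hQ0 hQ1
  apply mul_left_cancel₀ this
  linear_combination -L

theorem t3_prod {q : ℝ} (h0 : 0 < q) (h1 : q < 1) : t3 q = pinf (q ^ 2) * chi q ^ 2 := by
  have := jtp h0 h1 1 one_ne_zero (by simpa using norm3 h0 h1)
    (u := chi q) (w := chi q) (by simpa [chi] using (mult_add h0 h1 1).hasProd)
    (by simpa [chi] using (mult_add h0 h1 1).hasProd)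
  simpa [t3, sq] using this

theorem t4_prod {q : ℝ} (h0 : 0 < q) (h1 : q < 1) : t4 q = pinf (q ^ 2) * chim q ^ 2 := by
  have hm : HasProd (fun k : ℕ => 1 + (-1) * q ^ (2 * k + 1)) (chim q) := by
    simpa [sub_eq_add_neg, chim] using (mult_sub h0 h1 1).hasProd
  have := jtp h0 h1 (-1) (by norm_num) (norm4 h0 h1) (u := chim q) (w := chim q) hm
    (by rw [inv_neg_one]; exact hm)
  rw [t4, this, sq (chim q)]

theorem t2_prod {q : ℝ} (h0 : 0 < q) (h1 : q < 1) : t2 q = 2 * pinf (q ^ 2) * che q ^ 2 := by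
  have e : ∀ j : ℤ, q ^ j * q ^ (j ^ 2) = q ^ (j ^ 2 + j) := fun j => by
    rw [← zpow_add₀ h0.ne', add_comm]
  have hu : HasProd (fun k : ℕ => 1 + q * q ^ (2 * k + 1)) (che q) := by
    have := (mult_add h0 h1 2).hasProd
    refine this.congr_fun fun k => ?_
    ring
  have hw : HasProd (fun k : ℕ => 1 + q⁻¹ * q ^ (2 * k + 1)) (2 * che q) := by
    have h : Multipliable (fun k : ℕ => 1 + q ^ (2 * k)) := by
      simpa using mult_add h0 h1 0
    have h' : ∏' k : ℕ, (1 + q ^ (2 * k)) = 2 * che q := by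
      have h2 : Multipliable (fun k : ℕ => 1 + q ^ (2 * (k + 1))) := by
        simpa [mul_add] using mult_add h0 h1 2
      rw [tprod_eq_zero_mul' (f := fun k : ℕ => 1 + q ^ (2 * k)) h2, che]
      simp only [mul_zero, pow_zero, mul_add, mul_one]
      norm_num
    rw [← h']
    refine h.hasProd.congr_fun fun k => ?_
    rw [pow_succ]; field_simp
  have := jtp h0 h1 q h0.ne' (by simp only [e]; exact norm2 h0 h1) hu hw
  simp only [e] at this
  rw [t2, this]; ring

theorem weber_jacobi {q : ℝ} (h0 : 0 < q) (h1 : q < 1) :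
    chi q ^ 8 = chim q ^ 8 + 16 * q * che q ^ 8 := by
  have hP := pinf_ne (Q := q ^ 2) (by positivity) (pow_lt_one₀ h0.le h1 (by simp))
  have := jacobi_quartic h0 h1
  rw [t3_prod h0 h1, t4_prod h0 h1, t2_prod h0 h1] at this
  apply mul_left_cancel₀ (pow_ne_zero 4 hP)
  linear_combination this

/-- For `q ∈ (0,1)` and `v = -q χ³(q)/χ⁹(q³)`,
`(χ(q³)/χ³(q))³ = (1 + v)/(1 - 8v)`. -/
theorem chi_ratio_cubed (q : ℝ) (hq0 : 0 < q) (hq1 : q < 1) (v : ℝ)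
    (hv : v = -q * (chi q) ^ 3 / (chi (q ^ 3)) ^ 9) :
    (chi (q ^ 3) / (chi q) ^ 3) ^ 3 = (1 + v) / (1 - 8 * v) := by
  have hQ0 : 0 < q ^ 3 := by positivity
  have hQ1 : q ^ 3 < 1 := pow_lt_one₀ hq0.le hq1 (by simp)
  have hP := pinf_ne (Q := q ^ 2) (by positivity) (pow_lt_one₀ hq0.le hq1 (by simp))
  have hP' := pinf_ne (Q := (q ^ 3) ^ 2) (by positivity) (pow_lt_one₀ hQ0.le hQ1 (by simp))
  have hL := legendre3 hq0 hq1
  rw [t3_prod hq0 hq1, t4_prod hq0 hq1, t2_prod hq0 hq1,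
    t3_prod hQ0 hQ1, t4_prod hQ0 hQ1, t2_prod hQ0 hQ1] at hL
  have hL' : chi q ^ 2 * chi (q ^ 3) ^ 2 = chim q ^ 2 * chim (q ^ 3) ^ 2
      + 4 * q * (che q ^ 2 * che (q ^ 3) ^ 2) := by
    apply mul_left_cancel₀ (mul_ne_zero hP hP')
    linear_combination hL
  have ha := chi_pos hq0 hq1
  have hc := chi_pos hQ0 hQ1
  have key := weber_alg q _ _ _ _ _ _ hq0 ha hc (euler_prod hq0 hq1) (euler_prod hQ0 hQ1)
    (weber_jacobi hq0 hq1) (weber_jacobi hQ0 hQ1) hL'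
  generalize chi q = a at *
  generalize chi (q ^ 3) = c at *
  have e1 : 1 + v = (c ^ 9 - q * a ^ 3) / c ^ 9 := by rw [hv]; field_simp; ring
  have e2 : 1 - 8 * v = (c ^ 9 + 8 * q * a ^ 3) / c ^ 9 := by rw [hv]; field_simp; ring
  have h3 : 0 < c ^ 9 + 8 * q * a ^ 3 := by positivity
  rw [e1, e2, div_div_div_cancel_right₀ (by positivity), div_pow, div_eq_div_iff (by positivity) h3.ne']
  linear_combination key
end

section
/- For every real q with |q| < 1, Π_{m=0}^{∞} (1 + √2 · q^{2m+1} + q^{4m+2})(1 − q^{2m+2}) = φ(−q¹⁶) + √2 · q · ψ(−q⁸). -/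
/-- Ramanujan's theta function `φ(q) = ∑_{n ∈ ℤ} q^{n²}`. -/
noncomputable def phi (q : ℝ) : ℝ := ∑' n : ℤ, q ^ (n ^ 2)

/-- Ramanujan's theta function `ψ(q) = ∑_{n=0}^∞ q^{n(n+1)/2}`. -/
noncomputable def psi (q : ℝ) : ℝ := ∑' n : ℕ, q ^ (n * (n + 1) / 2)

namespace F41
open Filter Topology

/-- Gaussian binomials. -/
def gb (p : ℂ) : ℕ → ℕ → ℂ
  | 0, 0 => 1
  | 0, _ + 1 => 0
  | _ + 1, 0 => 1
  | M + 1, j + 1 => gb p M j + p ^ (j + 1) * gb p M (j + 1)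

def poch (p : ℂ) (k : ℕ) : ℂ := ∏ i ∈ Finset.range k, (1 - p ^ (i + 1))

lemma gb_zero (p : ℂ) (M : ℕ) : gb p M 0 = 1 := by cases M <;> simp [gb]

lemma gb_gt (p : ℂ) (M : ℕ) : ∀ j, M < j → gb p M j = 0 := by
  induction M with
  | zero => intro j hj; cases j with
    | zero => omega
    | succ j => simp [gb]
  | succ M ih => intro j hj; cases j with
    | zero => omega
    | succ j => simp [gb, ih j (by omega), ih (j+1) (by omega)]

lemma gb_poch (p : ℂ) (n : ℕ) : ∀ j k, j + k = n →
    gb p n j * (poch p j * poch p k) = poch p n := by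
  induction n with
  | zero =>
    intro j k h
    obtain rfl : j = 0 := by omega
    obtain rfl : k = 0 := by omega
    simp [gb, poch]
  | succ n ih =>
    intro j k h
    cases j with
    | zero => obtain rfl : k = n + 1 := by omega
              simp [gb, poch]
    | succ j =>
      cases k with
      | zero =>
        obtain rfl : j = n := by omega
        have := ih j 0 (by omega)
        simp only [gb, gb_gt p j (j+1) (by omega)]
        simp only [poch, Finset.prod_range_succ, Finset.prod_range_zero] at *
        linear_combination (1 - p ^ (j+1)) * this
      | succ k =>
        have h1 := ih j (k+1) (by omega)
        have h2 := ih (j+1) k (by omega)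
        obtain rfl : n = j + k + 1 := by omega
        rw [show gb p (j + k + 1 + 1) (j + 1) = gb p (j + k + 1) j
          + p ^ (j + 1) * gb p (j + k + 1) (j + 1) from by rw [gb]]
        have e : ∀ m, poch p (m+1) = poch p m * (1 - p^(m+1)) := fun m => by
          simp [poch, Finset.prod_range_succ]
        rw [e (j+k+1)]
        rw [e j, e k] at *
        linear_combination (1 - p ^ (j+1)) * h1 + p^(j+1) * (1 - p^(k+1)) * h2

lemma qbinom (p : ℂ) (M : ℕ) : ∀ x : ℂ, ∏ k ∈ Finset.range M, (1 + x * p ^ k) =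
    ∑ j ∈ Finset.range (M + 1), p ^ (j.choose 2) * gb p M j * x ^ j := by
  induction M with
  | zero => intro x; simp [gb]
  | succ M ih =>
    intro x
    rw [Finset.prod_range_succ']
    have : ∀ k, 1 + x * p ^ (k+1) = 1 + (x * p) * p ^ k := fun k => by ring
    simp only [this]
    rw [ih (x * p), Finset.sum_range_succ' _ (M+1)]
    have hc : ∀ j, (j+1).choose 2 = j + j.choose 2 := fun j => by
      rw [Nat.choose_succ_succ' j 1]; simp
    have e : ∀ j, p ^ ((j+1).choose 2) * gb p (M+1) (j+1) * x ^ (j+1) =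
       x * (p ^ (j.choose 2) * gb p M j * (x * p) ^ j) +
        (p ^ ((j+1).choose 2) * gb p M (j+1) * (x * p) ^ (j+1)) := by
      intro j
      simp only [gb, hc]; ring
    simp only [e, Finset.sum_add_distrib, ← Finset.mul_sum]
    have h2 := Finset.sum_range_succ' (fun j => p ^ (j.choose 2) * gb p M j * (x * p) ^ j) (M+1)
    rw [Finset.sum_range_succ] at h2
    rw [gb_gt p M (M+1) (by omega)] at h2
    simp only [gb_zero] at *
    simp at *
    linear_combination h2

lemma prod_shift (q z : ℂ) (hq : q ≠ 0) (hz : z ≠ 0) (N : ℕ) :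
    ∏ k ∈ Finset.range (2 * N), (1 + z * q ^ (2 * (k:ℤ) + 1 - 2 * N)) =
    z ^ N * (q ^ (N^2))⁻¹ * ∏ m ∈ Finset.range N,
      ((1 + z * q ^ (2 * m + 1)) * (1 + z⁻¹ * q ^ (2 * m + 1))) := by
  induction N with
  | zero => simp
  | succ N ih =>
    rw [show 2 * (N+1) = (2 * N + 1) + 1 by ring, Finset.prod_range_succ, Finset.prod_range_succ']
    have e : ∀ k : ℕ, (2 * ((k+1 : ℕ):ℤ) + 1 - 2 * ((N+1 : ℕ):ℤ)) = 2 * (k:ℤ) + 1 - 2 * N := by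
      intro k; push_cast; ring
    simp only [e, ih, Finset.prod_range_succ]
    have e1 : (2 * ((2 * N : ℕ):ℤ) + 1 - 2 * (N:ℤ)) = ((2 * N + 1 : ℕ) : ℤ) := by
      push_cast; ring
    have e2 : (2 * ((0 : ℕ):ℤ) + 1 - 2 * ((N+1 : ℕ):ℤ)) = -((2 * N + 1 : ℕ) : ℤ) := by
      push_cast; ring
    rw [e1, e2, zpow_neg, zpow_natCast]
    have : (N+1)^2 = N^2 + (2 * N + 1) := by ring
    rw [this, pow_add q (N^2)]
    field_simp
    ring

lemma finite_jtp (q z : ℂ) (hq : q ≠ 0) (hz : z ≠ 0) (N : ℕ) :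
    ∏ m ∈ Finset.range N, ((1 + z * q ^ (2 * m + 1)) * (1 + z⁻¹ * q ^ (2 * m + 1))) =
    ∑ j ∈ Finset.range (2 * N + 1),
      z ^ ((j:ℤ) - N) * q ^ (((j:ℤ) - N)^2) * gb (q^2) (2 * N) j := by
  have h := prod_shift q z hq hz N
  have h2 := qbinom (q^2) (2 * N) (z * q ^ (1 - 2 * (N:ℤ)))
  have e : ∀ k : ℕ, 1 + z * q ^ (1 - 2 * (N:ℤ)) * (q^2)^k =
      1 + z * q ^ (2 * (k:ℤ) + 1 - 2 * N) := by
    intro k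
    rw [← pow_mul, mul_assoc, ← zpow_natCast q (2 * k), ← zpow_add₀ hq]
    congr 3; push_cast; ring
  simp only [e] at h2
  rw [h] at h2
  have h3 : z ^ N * (q ^ (N^2))⁻¹ ≠ 0 := by positivity
  apply mul_left_cancel₀ h3
  rw [h2, Finset.mul_sum]
  refine Finset.sum_congr rfl fun j _ => ?_
  have hc : (2 * (j.choose 2) : ℤ) = j * (j - 1) := by
    have := Nat.triangle_succ (j-1)
    have h5 : j.choose 2 * 2 = j * (j-1) := by
      rw [Nat.choose_two_right]; exact Nat.div_mul_cancel (Nat.even_mul_pred_self j).two_dvd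
    rcases j with _ | j
    · simp
    · simp at h5; push_cast; push_cast [← @Nat.cast_inj ℤ] at h5; linarith
  rw [mul_pow, ← zpow_natCast z N, ← zpow_natCast q (N^2), ← zpow_neg, ← zpow_natCast z j,
    ← pow_mul, ← zpow_natCast q (2 * _), ← zpow_natCast (q ^ (_:ℤ)) j, ← zpow_mul]
  have hz1 : z ^ (j:ℤ) = z ^ (N:ℤ) * z ^ ((j:ℤ) - N) := by
    rw [← zpow_add₀ hz]; congr 1; ring
  have hq1 : q ^ ((2 * j.choose 2 : ℕ) : ℤ) * q ^ ((1 - 2 * (N:ℤ)) * j) =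
      q ^ (-((N^2 : ℕ):ℤ)) * q ^ (((j:ℤ) - N)^2) := by
    rw [← zpow_add₀ hq, ← zpow_add₀ hq]; congr 1; push_cast; rw [hc]; ring
  rw [hz1]
  linear_combination (z ^ (N:ℤ) * z ^ ((j:ℤ) - N) * gb (q^2) (2 * N) j) * hq1

lemma poch_tendsto (p : ℂ) (hp : ‖p‖ < 1) : ∃ L : ℂ, L ≠ 0 ∧ Tendsto (poch p) atTop (𝓝 L) := by
  have hs : Summable fun n : ℕ => ‖-p ^ (n + 1)‖ := by
    simpa using (summable_nat_add_iff 1).mpr (summable_geometric_of_lt_one (norm_nonneg _) hp)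
  refine ⟨∏' n : ℕ, (1 + -p ^ (n+1)), ?_, ?_⟩
  · refine tprod_one_add_ne_zero_of_summable (f := fun n : ℕ => -p ^ (n+1)) ?_ hs
    intro i h
    have h1 : p ^ (i+1) = 1 := by linear_combination -h
    have h2 : ‖p‖ ^ (i+1) < 1 := pow_lt_one₀ (norm_nonneg _) hp (by omega)
    rw [← norm_pow, h1] at h2
    simp at h2
  · have := (multipliable_one_add_of_summable hs).tendsto_prod_tprod_nat
    simp only [← sub_eq_add_neg] at this ⊢
    exact this

lemma poch_ne (p : ℂ) (hp : ‖p‖ < 1) (k : ℕ) : poch p k ≠ 0 := by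
  rw [poch, Finset.prod_ne_zero_iff]
  intro i _ h
  have h1 : p ^ (i+1) = 1 := by linear_combination -h
  have h2 : ‖p‖ ^ (i+1) < 1 := pow_lt_one₀ (norm_nonneg _) hp (by omega)
  rw [← norm_pow, h1] at h2
  simp at h2

lemma bdd_of_tendsto (a : ℕ → ℂ) (L : ℂ) (h : Tendsto a atTop (𝓝 L)) : ∃ C, 0 ≤ C ∧ ∀ k, ‖a k‖ ≤ C := by
  obtain ⟨C, hC⟩ := (Metric.isBounded_range_of_tendsto a h).exists_norm_le
  exact ⟨C, (norm_nonneg _).trans (hC _ ⟨0, rfl⟩), fun k => hC _ ⟨k, rfl⟩⟩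

lemma summable_natAbs (r : ℝ) (h0 : 0 ≤ r) (h1 : r < 1) : Summable fun n : ℤ => r ^ n.natAbs := by
  have := summable_geometric_of_lt_one h0 h1
  apply Summable.of_nat_of_neg
  · simpa using this
  · simpa using this

lemma norm_term (q z : ℂ) (hz : ‖z‖ = 1) (h1 : ‖q‖ < 1) (n : ℤ) :
    ‖z ^ n * q ^ (n^2)‖ ≤ ‖q‖ ^ n.natAbs := by
  rw [norm_mul, norm_zpow, hz, one_zpow, one_mul, norm_zpow, ← Int.natAbs_sq, ← Nat.cast_pow,
    zpow_natCast]
  apply pow_le_pow_of_le_one (norm_nonneg _) h1.le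
  exact Nat.le_self_pow (by norm_num) _

lemma summable_term (q z : ℂ) (hz : ‖z‖ = 1) (h1 : ‖q‖ < 1) :
    Summable fun n : ℤ => z ^ n * q ^ (n^2) :=
  Summable.of_norm_bounded (summable_natAbs _ (norm_nonneg _) h1) (norm_term q z hz h1)

noncomputable def F (q z : ℂ) (N : ℕ) (n : ℤ) : ℂ :=
  if n.natAbs ≤ N then z ^ n * q ^ (n^2) *
    (poch (q^2) (2 * N) * poch (q^2) N * (poch (q^2) (n + N).toNat)⁻¹ *
      (poch (q^2) (N - n).toNat)⁻¹) else 0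

lemma prod_eq_tsum (q z : ℂ) (hz : z ≠ 0) (h0 : q ≠ 0) (h1 : ‖q‖ < 1) (N : ℕ) :
    ∏ m ∈ Finset.range N, ((1 + z * q ^ (2 * m + 1)) * (1 + z⁻¹ * q ^ (2 * m + 1)) *
      (1 - q ^ (2 * m + 2))) = ∑' n : ℤ, F q z N n := by
  have hp : ‖q^2‖ < 1 := by rw [norm_pow]; exact pow_lt_one₀ (norm_nonneg _) h1 (by norm_num)
  rw [Finset.prod_mul_distrib, finite_jtp q z h0 hz N]
  have e : ∏ m ∈ Finset.range N, (1 - q ^ (2 * m + 2)) = poch (q^2) N := by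
    refine Finset.prod_congr rfl fun i _ => ?_
    rw [← pow_mul]; ring
  rw [e, Finset.sum_mul]
  have hinj : Function.Injective (fun j : ℕ => (j:ℤ) - N) := fun a b h => by simpa using h
  rw [← hinj.tsum_eq (f := F q z N), tsum_eq_sum (s := Finset.range (2 * N + 1))]
  · refine Finset.sum_congr rfl fun j hj => ?_
    rw [Finset.mem_range] at hj
    rw [F, if_pos (by omega)]
    have h2 : ((j:ℤ) - N + N).toNat = j := by omega
    have h3 : ((N:ℤ) - (j - N)).toNat = 2 * N - j := by omega
    rw [h2, h3]
    have := gb_poch (q^2) (2 * N) j (2 * N - j) (by omega)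
    rw [← this]
    have := poch_ne _ hp j
    have := poch_ne _ hp (2 * N - j)
    field_simp
  · intro j hj
    rw [Finset.mem_range] at hj
    rw [F, if_neg (by omega)]
  · intro n hn
    rw [Function.mem_support] at hn
    by_cases h : n.natAbs ≤ N
    · exact ⟨(n + N).toNat, by simp; omega⟩
    · rw [F, if_neg h] at hn; exact absurd rfl hn

lemma jtp (q z : ℂ) (hz : ‖z‖ = 1) (h0 : q ≠ 0) (h1 : ‖q‖ < 1) :
    Tendsto (fun N => ∏ m ∈ Finset.range N, ((1 + z * q ^ (2 * m + 1)) *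
      (1 + z⁻¹ * q ^ (2 * m + 1)) * (1 - q ^ (2 * m + 2)))) atTop
      (𝓝 (∑' n : ℤ, z ^ n * q ^ (n^2))) := by
  have hp : ‖q^2‖ < 1 := by rw [norm_pow]; exact pow_lt_one₀ (norm_nonneg _) h1 (by norm_num)
  have hz0 : z ≠ 0 := by rintro rfl; simp at hz
  simp only [prod_eq_tsum q z hz0 h0 h1]
  obtain ⟨L, hL, hT⟩ := poch_tendsto _ hp
  obtain ⟨C, hC0, hC⟩ := bdd_of_tendsto _ _ hT
  obtain ⟨D, hD0, hD⟩ := bdd_of_tendsto _ _ (hT.inv₀ hL)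
  apply tendsto_tsum_of_dominated_convergence
    (bound := fun n : ℤ => ‖q‖ ^ n.natAbs * (C * C * D * D))
  · exact (summable_natAbs _ (norm_nonneg _) h1).mul_right _
  · intro n
    have t1 : Tendsto (fun N : ℕ => (n + N).toNat) atTop atTop := by
      refine tendsto_atTop.2 fun b => ?_
      filter_upwards [eventually_ge_atTop (b + n.natAbs)] with N hN
      omega
    have t2 : Tendsto (fun N : ℕ => ((N:ℤ) - n).toNat) atTop atTop := by
      refine tendsto_atTop.2 fun b => ?_
      filter_upwards [eventually_ge_atTop (b + n.natAbs)] with N hN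
      omega
    have t3 : Tendsto (fun N : ℕ => 2 * N) atTop atTop := by
      refine tendsto_atTop.2 fun b => ?_
      filter_upwards [eventually_ge_atTop b] with N hN
      omega
    have := ((((hT.comp t3).mul hT).mul ((hT.inv₀ hL).comp t1)).mul
      ((hT.inv₀ hL).comp t2)).const_mul (z ^ n * q ^ (n^2))
    have e : z ^ n * q ^ (n^2) * (L * L * L⁻¹ * L⁻¹) = z ^ n * q ^ (n^2) := by field_simp
    rw [e] at this
    refine this.congr' ?_
    filter_upwards [eventually_ge_atTop n.natAbs] with N hN
    rw [F, if_pos hN]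
    rfl
  · refine Eventually.of_forall fun N n => ?_
    rw [F]
    split_ifs with h
    · rw [norm_mul]
      refine mul_le_mul (norm_term q z hz h1 n) ?_ (norm_nonneg _) (by positivity)
      rw [norm_mul, norm_mul, norm_mul]
      gcongr
      · exact hC _
      · exact hC _
      · exact hD _
      · exact hD _
    · simp; positivity

lemma tsum_even_odd (f : ℤ → ℂ) (hf : Summable f) :
    ∑' n, f n = ∑' n, f (2 * n) + ∑' n : ℕ, (f (2 * n + 1) + f (-(2 * n + 1))) := by
  have i1 : Function.Injective (fun n : ℤ => 2 * n) := fun a b h => by simpa using h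
  have i2 : Function.Injective (fun n : ℤ => 2 * n + 1) := fun a b h => by simpa using h
  have hc : IsCompl (Set.range (fun n : ℤ => 2 * n)) (Set.range (fun n : ℤ => 2 * n + 1)) := by
    constructor
    · rw [Set.disjoint_left]; rintro _ ⟨a, rfl⟩ ⟨b, hb⟩; simp at hb; omega
    · rw [codisjoint_iff]; ext n; simp
      rcases Int.even_or_odd' n with ⟨k, h | h⟩
      · exact Or.inl ⟨k, by omega⟩
      · exact Or.inr ⟨k, by omega⟩
  have h1 := hf.comp_injective i1
  have h2 := hf.comp_injective i2
  have := (i1.hasSum_range_iff.2 h1.hasSum).add_isCompl hc (i2.hasSum_range_iff.2 h2.hasSum)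
  rw [this.tsum_eq]
  congr 1
  have h3 := HasSum.nat_add_neg_add_one h2.hasSum
  rw [← h3.tsum_eq]
  refine tsum_congr fun n => ?_
  simp only [Function.comp]
  congr 2

lemma theta_eval (q z : ℂ) (s : ℂ) (h1 : ‖q‖ < 1) (hz : ‖z‖ = 1) (hz4 : z ^ 4 = -1) (hs : z + z⁻¹ = s) :
    ∑' n : ℤ, z ^ n * q ^ (n^2) = ∑' n : ℤ, (-q^16) ^ (n^2) +
      s * q * ∑' n : ℕ, (-q^8) ^ (n * (n+1) / 2) := by
  have hz0 : z ≠ 0 := by rintro rfl; simp at hz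
  have hS := summable_term q z hz h1
  have hS2 : Summable fun n : ℤ => z ^ (2 * n) * q ^ ((2 * n)^2) :=
    hS.comp_injective (i := fun n : ℤ => 2 * n) (fun a b h => by simpa using h)
  rw [tsum_even_odd _ hS, tsum_even_odd (fun n : ℤ => z ^ (2 * n) * q ^ ((2 * n)^2)) hS2]
  have hinv4 : (z⁻¹) ^ 4 = -1 := by rw [inv_pow, hz4]; norm_num
  have z1 : ∀ n : ℕ, z ^ (2 * (2 * (n:ℤ) + 1)) * q ^ ((2 * (2 * (n:ℤ) + 1))^2) +
      z ^ (2 * (-(2 * (n:ℤ) + 1))) * q ^ ((2 * (-(2 * (n:ℤ) + 1)))^2) = 0 := by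
    intro n
    have e1 : (2 * (-(2 * (n:ℤ) + 1)))^2 = (2 * (2 * (n:ℤ) + 1))^2 := by ring
    rw [e1, ← add_mul]
    have e2 : z ^ (2 * (2 * (n:ℤ) + 1)) = (-1)^n * z^2 := by
      rw [← hz4, ← pow_mul, ← pow_add, ← zpow_natCast]; congr 1; push_cast; ring
    have e3 : z ^ (2 * (-(2 * (n:ℤ) + 1))) = (-1)^n * (z⁻¹)^2 := by
      rw [← hinv4, ← pow_mul, ← pow_add, ← zpow_natCast, inv_zpow', ]; congr 1; push_cast; ring
    rw [e2, e3]
    have : z^2 + (z⁻¹)^2 = 0 := by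
      field_simp; linear_combination hz4
    linear_combination ((-1)^n * q ^ ((2 * (2 * (n:ℤ) + 1))^2)) * this
  simp only [z1, tsum_zero, add_zero]
  congr 1
  · refine tsum_congr fun n => ?_
    have e1 : (2 * (2 * n))^2 = 16 * n^2 := by ring
    have e2 : (2 * (2 * n)) = 4 * n := by ring
    rw [e1, e2, zpow_mul, zpow_mul, neg_eq_neg_one_mul (q^16), mul_zpow]
    have : z ^ (4:ℤ) = -1 := by exact_mod_cast hz4
    rw [this]
    congr 1
    rcases Int.even_or_odd n with h | h
    · rw [h.neg_one_zpow, Even.neg_one_zpow]; exact h.pow_of_ne_zero (by norm_num)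
    · rw [h.neg_one_zpow, (h.pow).neg_one_zpow]
  · rw [← tsum_mul_left]
    refine tsum_congr fun n => ?_
    obtain ⟨t, ht⟩ : ∃ t, n * (n+1) = 2 * t := (Nat.even_mul_succ_self n).two_dvd
    have e1 : (-(2 * (n:ℤ) + 1))^2 = (2 * (n:ℤ) + 1)^2 := by ring
    have e2 : (2 * (n:ℤ) + 1)^2 = ((8 * t + 1 : ℕ) : ℤ) := by
      push_cast; have : (n:ℤ) * (n+1) = 2 * t := by exact_mod_cast ht
      linear_combination 4 * this
    have e3 : n * (n+1) / 2 = t := by omega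
    rw [e1, e2, e3, zpow_natCast, ← add_mul]
    have key : z ^ (2 * (n:ℤ) + 1) + z ^ (-(2 * (n:ℤ) + 1)) = (-1)^t * s := by
      have e4 : (2 * (n:ℤ) + 1) = ((2 * n + 1 : ℕ) : ℤ) := by push_cast; ring
      rw [e4, ← inv_zpow', zpow_natCast, zpow_natCast, ← hs]
      have hz2 : (z⁻¹)^2 = - z^2 := by
        field_simp; linear_combination hz4
      have hz3 : z * z⁻¹ = 1 := mul_inv_cancel₀ hz0
      rcases Nat.even_or_odd' n with ⟨k, rfl | rfl⟩
      · have a1 : 2 * (2 * k) + 1 = 4 * k + 1 := by ring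
        rw [a1, pow_succ, pow_succ, pow_mul, pow_mul, hz4, hinv4]
        have : t = k + 2 * (k * k) := by nlinarith
        rw [this, pow_add, pow_mul (-1 : ℂ) 2]; norm_num; ring
      · have a1 : 2 * (2 * k + 1) + 1 = 4 * k + 3 := by ring
        rw [a1, pow_add, pow_add, pow_mul, pow_mul, hz4, hinv4]
        have : t = k + 1 + 2 * (k * (k + 1)) := by nlinarith
        rw [this, pow_add, pow_mul (-1 : ℂ) 2, pow_succ (-1 : ℂ) k]
        have b1 : z ^ 3 = - z⁻¹ := by
          field_simp; linear_combination hz4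
        have b2 : z⁻¹ ^ 3 = - z := by
          field_simp; linear_combination hz4
        rw [b1, b2]; norm_num; ring
    rw [key, neg_eq_neg_one_mul (q^8), mul_pow, ← pow_mul, pow_succ]; ring

end F41

/-- For every real `q` with `|q| < 1`,
`∏_{m=0}^∞ (1 + √2 q^{2m+1} + q^{4m+2})(1 - q^{2m+2}) = φ(-q¹⁶) + √2 q ψ(-q⁸)`. -/
theorem F41_product_identity (q : ℝ) (hq : |q| < 1) :
    (∏' m : ℕ, (1 + Real.sqrt 2 * q ^ (2 * m + 1) + q ^ (4 * m + 2)) * (1 - q ^ (2 * m + 2)))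
      = phi (-(q ^ 16)) + Real.sqrt 2 * q * psi (-(q ^ 8)) := by
  by_cases h0 : q = 0
  · subst h0
    have : phi (-(0 ^ 16)) = 1 := by
      rw [phi, tsum_eq_single 0]
      · simp
      · intro n hn
        have : n ^ 2 ≠ 0 := pow_ne_zero _ hn
        simp [zero_zpow _ this]
    rw [this]
    simp
  have hs2 : ((Real.sqrt 2 : ℝ) : ℂ) ^ 2 = 2 := by
    rw [← Complex.ofReal_pow, Real.sq_sqrt (by norm_num)]; simp
  set s : ℂ := ((Real.sqrt 2 : ℝ) : ℂ) with hs
  set z : ℂ := s / 2 * (1 + Complex.I) with hzdef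
  have hI := Complex.I_sq
  have hz2 : z ^ 2 = Complex.I := by
    rw [hzdef]; linear_combination (1 + Complex.I)^2/4 * hs2 + hI / 2
  have hz4 : z ^ 4 = -1 := by
    rw [show 4 = 2 * 2 from rfl, pow_mul, hz2, hI]
  have hz0 : z ≠ 0 := by intro h; rw [h] at hz4; norm_num at hz4
  have hzi : z⁻¹ = s / 2 * (1 - Complex.I) := by
    apply inv_eq_of_mul_eq_one_right
    rw [hzdef]; linear_combination (1 - Complex.I^2)/4 * hs2 - hI / 2
  have hsum : z + z⁻¹ = s := by rw [hzi, hzdef]; ring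
  have hzn : ‖z‖ = 1 := by
    have : ‖z‖ ^ 4 = 1 := by rw [← norm_pow, hz4]; simp
    exact (pow_eq_one_iff_of_nonneg (norm_nonneg _) (by norm_num)).1 this
  have h1 : ‖(q:ℂ)‖ < 1 := by simpa using hq
  have hlim := F41.jtp (q:ℂ) z hzn (by exact_mod_cast h0) h1
  rw [F41.theta_eval (q:ℂ) z s h1 hzn hz4 hsum] at hlim
  have hR : Filter.Tendsto (fun N => ∏ m ∈ Finset.range N,
      ((1 + Real.sqrt 2 * q ^ (2 * m + 1) + q ^ (4 * m + 2)) * (1 - q ^ (2 * m + 2))))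
      Filter.atTop (nhds (phi (-(q ^ 16)) + Real.sqrt 2 * q * psi (-(q ^ 8)))) := by
    rw [← Filter.tendsto_ofReal_iff]
    rw [phi, psi]
    push_cast
    refine hlim.congr fun N => Finset.prod_congr rfl fun m _ => ?_
    congr 1
    have : z * z⁻¹ = 1 := mul_inv_cancel₀ hz0
    rw [← hs, ← hsum]
    linear_combination (q:ℂ) ^ (4 * m + 2) * this
  have hg : Summable fun n : ℕ => |q| ^ n := summable_geometric_of_lt_one (abs_nonneg _) hq
  have hA : Summable fun m : ℕ => |q| ^ (2 * m + 1) :=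
    hg.comp_injective (i := fun m : ℕ => 2 * m + 1) (fun a b h => by simpa using h)
  have hB : Summable fun m : ℕ => |q| ^ (4 * m + 2) :=
    hg.comp_injective (i := fun m : ℕ => 4 * m + 2) (fun a b h => by simpa using h)
  have hC : Summable fun m : ℕ => |q| ^ (2 * m + 2) :=
    hg.comp_injective (i := fun m : ℕ => 2 * m + 2) (fun a b h => by simpa using h)
  have m1 : Multipliable fun m : ℕ => 1 + (Real.sqrt 2 * q ^ (2 * m + 1) + q ^ (4 * m + 2)) := by
    apply Real.multipliable_one_add_of_summable
    apply Summable.add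
    · apply Summable.mul_left
      exact Summable.of_norm (by simpa using hA)
    · exact Summable.of_norm (by simpa only [norm_pow, Real.norm_eq_abs] using hB)
  have m2 : Multipliable fun m : ℕ => 1 + (-q ^ (2 * m + 2)) := by
    apply Real.multipliable_one_add_of_summable
    exact Summable.of_norm (by simpa only [norm_neg, norm_pow, Real.norm_eq_abs] using hC)
  have m3 := m1.mul m2
  have hT := m3.tendsto_prod_tprod_nat
  simp only [← add_assoc, ← sub_eq_add_neg] at hT
  exact tendsto_nhds_unique hT hR
end

section
/- Let x > 0 be real and set q = e^{−π/x}. Then F_{(4,1)}(x) = −(π/(√2 · x)) · log( (φ(−q¹⁶) − √2 · q · ψ(−q⁸)) / (φ(−q¹⁶) + √2 · q · ψ(−q⁸)) ). -/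
open Filter

lemma hs_congr {ι : Type*} {f g : ι → ℝ} {a b : ℝ} (h : HasSum f a)
    (hf : ∀ i, g i = f i) (hab : b = a) : HasSum g b := by
  rw [hab, show g = f from funext hf]; exact h

lemma hasSum_coth (b : ℝ) (hb : 0 < b) :
    HasSum (fun m : ℤ => 1 / ((m : ℝ) ^ 2 + b ^ 2))
      (Real.pi / b * (Real.cosh (Real.pi * b) / Real.sinh (Real.pi * b))) := by
  have hs : Real.sinh (Real.pi * b) ≠ 0 := by
    have := Real.sinh_pos_iff.mpr (mul_pos Real.pi_pos hb)
    exact this.ne'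
  have hmem : (Complex.I * b : ℂ) ∈ Complex.integerComplement := by
    rw [Complex.mem_integerComplement_iff]
    rintro ⟨n, hn⟩
    have := congrArg Complex.im hn
    simp at this
    exact hb.ne this
  have hbC : (b : ℂ) ≠ 0 := by exact_mod_cast hb.ne'
  have hsC : Complex.sinh (Real.pi * b) ≠ 0 := by
    rw [← Complex.ofReal_mul, ← Complex.ofReal_sinh]; exact_mod_cast hs
  have h1 : HasSum (fun n : ℕ => cotTerm (Complex.I * b) n)
      (Real.pi * Complex.cot (Real.pi * (Complex.I * b)) - 1 / (Complex.I * b)) :=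
    (Summable.hasSum_iff_tendsto_nat (summable_cotTerm hmem)).mpr
      (tendsto_logDeriv_euler_cot_sub hmem)
  have h2 := h1.mul_left (Complex.I / (2 * b))
  have hval : Complex.I / (2 * b) *
      (Real.pi * Complex.cot (Real.pi * (Complex.I * b)) - 1 / (Complex.I * b)) =
      ((Real.pi * (Real.cosh (Real.pi * b) / Real.sinh (Real.pi * b)) / (2 * b)
        - 1 / (2 * b ^ 2) : ℝ) : ℂ) := by
    have : (Real.pi * (Complex.I * b) : ℂ) = (Real.pi * b) * Complex.I := by ring
    rw [this, Complex.cot, Complex.cos_mul_I, Complex.sin_mul_I]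
    push_cast
    field_simp
  have hterm : (fun n : ℕ => Complex.I / (2 * b) * cotTerm (Complex.I * b) n) =
      fun n : ℕ => ((1 / (((n + 1 : ℕ) : ℝ) ^ 2 + b ^ 2) : ℝ) : ℂ) := by
    funext n
    rw [cotTerm_identity hmem]
    have e : ((Complex.I * b + (n + 1)) * (Complex.I * b - (n + 1)) : ℂ) =
        -(((n + 1 : ℕ) : ℂ) ^ 2 + b ^ 2) := by
      push_cast
      linear_combination (b : ℂ) ^ 2 * Complex.I_sq
    have e2 : (((n + 1 : ℕ) : ℂ) ^ 2 + b ^ 2) ≠ 0 := by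
      have : (((n + 1 : ℕ) : ℝ) ^ 2 + b ^ 2) ≠ 0 := by positivity
      exact_mod_cast this
    rw [e]
    push_cast at e2 ⊢
    field_simp
    rw [Complex.I_sq]
    ring
  rw [hval, hterm, Complex.hasSum_ofReal] at h2
  have h3 : HasSum (fun n : ℕ => 1 / (((n : ℤ) : ℝ) ^ 2 + b ^ 2))
      (Real.pi * (Real.cosh (Real.pi * b) / Real.sinh (Real.pi * b)) / (2 * b)
        - 1 / (2 * b ^ 2) + 1 / b ^ 2) := by
    have := (hasSum_nat_add_iff (f := fun n : ℕ => 1 / (((n : ℤ) : ℝ) ^ 2 + b ^ 2)) 1).mp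
      (by simpa using h2)
    simpa using this
  have h4 : HasSum (fun n : ℕ => 1 / (((-((n : ℤ) + 1) : ℤ) : ℝ) ^ 2 + b ^ 2))
      (Real.pi * (Real.cosh (Real.pi * b) / Real.sinh (Real.pi * b)) / (2 * b)
        - 1 / (2 * b ^ 2)) := by
    convert h2 using 3 with n
    push_cast; ring
  convert HasSum.of_nat_of_neg_add_one (f := fun m : ℤ => 1 / ((m : ℝ) ^ 2 + b ^ 2)) h3 h4 using 1
  field_simp
  ring

lemma hasSum_csch (b : ℝ) (hb : 0 < b) :
    HasSum (fun m : ℤ => (-1 : ℝ) ^ m / ((m : ℝ) ^ 2 + b ^ 2))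
      (Real.pi / (b * Real.sinh (Real.pi * b))) := by
  have hs : 0 < Real.sinh (Real.pi * (b / 2)) :=
    Real.sinh_pos_iff.mpr (mul_pos Real.pi_pos (by positivity))
  have hc := Real.cosh_pos (Real.pi * (b / 2))
  have h1 := hasSum_coth b hb
  have h2 := (hasSum_coth (b / 2) (by positivity)).mul_left (1 / 2)
  have inj : Function.Injective (fun m : ℤ => 2 * m) := fun a b h => by simpa using h
  have h3 : HasSum (fun m : ℤ => if Even m then 2 / ((m : ℝ) ^ 2 + b ^ 2) else 0)
      (1 / 2 * (Real.pi / (b / 2) *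
        (Real.cosh (Real.pi * (b / 2)) / Real.sinh (Real.pi * (b / 2))))) := by
    rw [← inj.hasSum_iff]
    · refine hs_congr h2 (fun m => ?_) rfl
      simp
      field_simp
    · intro m hm
      rw [if_neg]
      rintro ⟨k, hk⟩
      exact hm ⟨k, by simp; omega⟩
  refine hs_congr (h3.sub h1) (fun m => ?_) ?_
  · by_cases hm : Even m
    · simp only [hm, if_true, hm.neg_one_zpow]; ring
    · simp only [hm, if_false, (Int.not_even_iff_odd.mp hm).neg_one_zpow]; ring
  · have e : Real.pi * b = 2 * (Real.pi * (b / 2)) := by ring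
    rw [e, Real.sinh_two_mul, Real.cosh_two_mul]
    have := Real.cosh_sq (Real.pi * (b / 2))
    field_simp at *
    nlinarith

lemma inner_tsum (x : ℝ) (hx : 0 < x) (n : ℤ) :
    ∑' m : ℤ, (-1 : ℝ) ^ (m + n) / ((x * m) ^ 2 + (4 * (n : ℝ) + 1) ^ 2) =
      (-1 : ℝ) ^ n * (Real.pi / (x * |4 * (n : ℝ) + 1| *
        Real.sinh (Real.pi * |4 * (n : ℝ) + 1| / x))) := by
  have ha : 0 < |4 * (n : ℝ) + 1| := by
    rw [abs_pos]
    intro h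
    have : (4 * n + 1 : ℤ) = 0 := by exact_mod_cast h
    omega
  set a := |4 * (n : ℝ) + 1| with hadef
  have hsq : (4 * (n : ℝ) + 1) ^ 2 = a ^ 2 := by rw [hadef, sq_abs]
  have hs : 0 < Real.sinh (Real.pi * a / x) :=
    Real.sinh_pos_iff.mpr (by positivity)
  have h := ((hasSum_csch (a / x) (by positivity)).mul_left ((-1 : ℝ) ^ n / x ^ 2)).tsum_eq
  rw [← mul_div_assoc Real.pi] at h
  have e : (-1 : ℝ) ^ n * (Real.pi / (x * a * Real.sinh (Real.pi * a / x))) =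
    (-1 : ℝ) ^ n / x ^ 2 * (Real.pi / (a / x * Real.sinh (Real.pi * a / x))) := by
    field_simp
  rw [e, ← h]
  congr 1
  funext m
  rw [hsq, zpow_add₀ (by norm_num)]
  have : (x * m) ^ 2 + a ^ 2 ≠ 0 := by positivity
  have : (m : ℝ) ^ 2 + (a / x) ^ 2 ≠ 0 := by positivity
  field_simp

lemma hasSum_cos_log (y θ : ℝ) (hy : 0 < y) (hy1 : y < 1) :
    HasSum (fun a : ℕ => y ^ a * Real.cos (a * θ) / a)
      (-(1 / 2) * Real.log (1 - 2 * y * Real.cos θ + y ^ 2)) := by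
  have hz : ‖(y : ℂ) * Complex.exp (θ * Complex.I)‖ < 1 := by
    rw [norm_mul, Complex.norm_exp_ofReal_mul_I, mul_one, Complex.norm_real,
      Real.norm_of_nonneg hy.le]
    exact hy1
  have h := Complex.hasSum_re (Complex.hasSum_taylorSeries_neg_log hz)
  convert h using 1
  · funext a
    rw [mul_pow, ← Complex.exp_nat_mul, ← mul_assoc]
    rw [show ((a : ℂ) * θ * Complex.I) = ((a * θ : ℝ) : ℂ) * Complex.I by push_cast; ring]
    rw [← Complex.ofReal_pow, Complex.div_natCast_re, Complex.re_ofReal_mul,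
      Complex.exp_ofReal_mul_I_re]
  · rw [Complex.neg_re, Complex.log_re]
    have : ‖1 - (y : ℂ) * Complex.exp (θ * Complex.I)‖ =
        Real.sqrt (1 - 2 * y * Real.cos θ + y ^ 2) := by
      rw [Complex.norm_def, Complex.normSq_apply]
      congr 1
      simp [Complex.exp_ofReal_mul_I_re, Complex.exp_ofReal_mul_I_im]
      nlinarith [Real.sin_sq_add_cos_sq θ]
    rw [this, Real.log_sqrt]
    · ring
    · nlinarith [Real.sin_sq_add_cos_sq θ, sq_nonneg (y - Real.cos θ), sq_nonneg (Real.sin θ)]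

lemma cos_pi_four_int (n : ℤ) :
    Real.cos ((4 * (n : ℝ) + 1) * (Real.pi / 4)) = (-1) ^ n * (Real.sqrt 2 / 2) := by
  rw [show (4 * (n : ℝ) + 1) * (Real.pi / 4) = Real.pi / 4 + n * Real.pi by ring,
    Real.cos_add_int_mul_pi, Real.cos_pi_div_four]

lemma cos_three_pi_four (n : ℤ) :
    Real.cos ((n : ℝ) * (3 * Real.pi / 4)) = (-1) ^ n * Real.cos (n * (Real.pi / 4)) := by
  rw [show (n : ℝ) * (3 * Real.pi / 4) = n * Real.pi - n * (Real.pi / 4) by ring,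
    Real.cos_int_mul_pi_sub]

lemma natAbs_inj : Function.Injective (fun n : ℤ => (4 * n + 1).natAbs) := by
  intro a b h
  simp only at h
  omega

lemma hasSum_chi (y : ℝ) (hy : 0 < y) (hy1 : y < 1) :
    HasSum (fun n : ℤ => (-1 : ℝ) ^ n * y ^ (4 * n + 1).natAbs / |4 * (n : ℝ) + 1|)
      (-(1 / (2 * Real.sqrt 2)) * Real.log ((1 - Real.sqrt 2 * y + y ^ 2) /
        (1 + Real.sqrt 2 * y + y ^ 2))) := by
  have h2 : Real.sqrt 2 ^ 2 = 2 := Real.sq_sqrt (by norm_num)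
  have h2p : 0 < Real.sqrt 2 := by positivity
  have hA := hasSum_cos_log y (Real.pi / 4) hy hy1
  have hB := hasSum_cos_log y (3 * Real.pi / 4) hy hy1
  have hc3 : Real.cos (3 * Real.pi / 4) = - (Real.sqrt 2 / 2) := by
    have := cos_three_pi_four 1
    simpa using this
  have hD := (hA.sub hB).mul_left (1 / Real.sqrt 2)
  rw [← natAbs_inj.hasSum_iff] at hD
  · refine hs_congr hD (fun n => ?_) ?_
    · have habs : (((4 * n + 1).natAbs : ℕ) : ℝ) = |4 * (n : ℝ) + 1| := by
        rw [Nat.cast_natAbs]; push_cast; rfl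
      simp only [Function.comp, habs]
      have key : ∀ t : ℝ, Real.cos (|4 * (n : ℝ) + 1| * t) = Real.cos ((4 * (n : ℝ) + 1) * t) := by
        intro t
        rcases abs_choice (4 * (n : ℝ) + 1) with h | h <;> rw [h]
        rw [neg_mul, Real.cos_neg]
      have k3 := cos_three_pi_four (4 * n + 1)
      push_cast at k3
      have : (-1 : ℝ) ^ (4 * n + 1) = -1 := Odd.neg_one_zpow ⟨2 * n, by ring⟩
      rw [key, key, k3, this, cos_pi_four_int]
      field_simp
      norm_num
    · rw [Real.cos_pi_div_four, hc3, Real.log_div]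
      · rw [show 1 - 2 * y * (Real.sqrt 2 / 2) + y ^ 2 = 1 - Real.sqrt 2 * y + y ^ 2 by ring,
          show 1 - 2 * y * -(Real.sqrt 2 / 2) + y ^ 2 = 1 + Real.sqrt 2 * y + y ^ 2 by ring]
        field_simp
        ring
      · nlinarith [sq_nonneg (y - Real.sqrt 2 / 2)]
      · positivity
  · intro a ha
    have hev : Even a := by
      by_contra hodd
      rw [Nat.not_even_iff_odd] at hodd
      obtain ⟨k, rfl⟩ := hodd
      apply ha
      rcases Nat.even_or_odd' k with ⟨j, rfl | rfl⟩
      · exact ⟨j, by simp only; omega⟩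
      · exact ⟨-(j + 1), by simp only; omega⟩
    have k3 := cos_three_pi_four a
    have : (-1 : ℝ) ^ (a : ℤ) = 1 := Even.neg_one_zpow (by exact_mod_cast hev)
    rw [this] at k3
    push_cast at k3
    rw [k3]; ring

lemma double_sum (x : ℝ) (hx : 0 < x) (q : ℝ) (hq : q = Real.exp (-Real.pi / x)) :
    ∃ S : ℝ, HasSum (fun n : ℤ =>
        ∑' m : ℤ, (-1 : ℝ) ^ (m + n) / ((x * m) ^ 2 + (4 * (n : ℝ) + 1) ^ 2)) 
          (-(Real.pi / (Real.sqrt 2 * x)) * S) ∧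
      HasSum (fun k : ℕ => Real.log ((1 - Real.sqrt 2 * q ^ (2 * k + 1) + (q ^ (2 * k + 1)) ^ 2) /
        (1 + Real.sqrt 2 * q ^ (2 * k + 1) + (q ^ (2 * k + 1)) ^ 2))) S := by
  have hq0 : 0 < q := by rw [hq]; positivity
  have hq1 : q < 1 := by
    rw [hq, Real.exp_lt_one_iff]
    rw [neg_div]; simp; positivity
  have h2p : 0 < Real.sqrt 2 := by positivity
  set f : ℤ × ℕ → ℝ := fun p =>
    (-1 : ℝ) ^ p.1 * (q ^ (2 * p.2 + 1)) ^ (4 * p.1 + 1).natAbs / |4 * (p.1 : ℝ) + 1| with hf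
  have habs : ∀ n : ℤ, (((4 * n + 1).natAbs : ℕ) : ℝ) = |4 * (n : ℝ) + 1| := by
    intro n; rw [Nat.cast_natAbs]; push_cast; rfl
  have hpos : ∀ n : ℤ, 1 ≤ |4 * (n : ℝ) + 1| := by
    intro n
    rw [← habs]
    have : 1 ≤ (4 * n + 1).natAbs := by omega
    exact_mod_cast this
  have hsum : Summable f := by
    have s1 : Summable (fun n : ℤ => q ^ (4 * n + 1).natAbs) :=
      (summable_geometric_of_lt_one hq0.le hq1).comp_injective natAbs_inj
    have s2 : Summable (fun k : ℕ => q ^ k) := summable_geometric_of_lt_one hq0.le hq1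
    have s3 := s1.mul_of_nonneg s2 (fun n => by positivity) (fun n => by positivity)
    refine Summable.of_norm_bounded s3 ?_
    rintro ⟨n, k⟩
    simp only [hf]
    rw [norm_div, norm_mul, norm_zpow, norm_neg, norm_one, one_zpow, one_mul,
      Real.norm_of_nonneg (by positivity : 0 ≤ (q ^ (2 * k + 1)) ^ (4 * n + 1).natAbs),
      Real.norm_of_nonneg (abs_nonneg _)]
    refine (div_le_self (by positivity) (hpos n)).trans ?_
    rw [← pow_mul, ← pow_add]
    apply pow_le_pow_of_le_one hq0.le hq1.le
    have : 1 ≤ (4 * n + 1).natAbs := by omega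
    nlinarith
  have hS := hsum.hasSum
  have hk : HasSum (fun k : ℕ => -(1 / (2 * Real.sqrt 2)) *
      Real.log ((1 - Real.sqrt 2 * q ^ (2 * k + 1) + (q ^ (2 * k + 1)) ^ 2) /
        (1 + Real.sqrt 2 * q ^ (2 * k + 1) + (q ^ (2 * k + 1)) ^ 2))) (∑' p, f p) := by
    have hS' := (Equiv.prodComm ℕ ℤ).hasSum_iff.mpr hS
    refine hS'.prod_fiberwise (fun k => ?_)
    exact hasSum_chi (q ^ (2 * k + 1)) (by positivity) (pow_lt_one₀ hq0.le hq1 (by omega))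
  have hn : HasSum (fun n : ℤ => x / (2 * Real.pi) * 
      ∑' m : ℤ, (-1 : ℝ) ^ (m + n) / ((x * m) ^ 2 + (4 * (n : ℝ) + 1) ^ 2)) (∑' p, f p) := by
    refine hS.prod_fiberwise (fun n => ?_)
    rw [inner_tsum x hx]
    have ha := hpos n
    set A := (4 * n + 1).natAbs with hA
    have hA1 : 1 ≤ A := by omega
    have hAq : q ^ A < 1 := pow_lt_one₀ hq0.le hq1 (by omega)
    have hg := (hasSum_geometric_of_lt_one (r := (q ^ A) ^ 2) (by positivity)
      (pow_lt_one₀ (by positivity) hAq (by norm_num))).mul_left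
        ((-1 : ℝ) ^ n * q ^ A / |4 * (n : ℝ) + 1|)
    refine hs_congr hg (fun k => ?_) ?_
    · simp only [hf]
      rw [← hA]
      ring
    · have e1 : Real.exp (-(Real.pi * |4 * (n : ℝ) + 1| / x)) = q ^ A := by
        rw [hq, ← Real.exp_nat_mul, habs]
        congr 1; ring
      have e2 : Real.exp (Real.pi * |4 * (n : ℝ) + 1| / x) = (q ^ A)⁻¹ := by
        rw [← e1, Real.exp_neg, inv_inv]
      rw [Real.sinh_eq, e1, e2]
      have hQ : 0 < q ^ A := by positivity
      have h3 : 1 - (q ^ A) ^ 2 ≠ 0 := by nlinarith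
      have h4 : (q ^ A)⁻¹ - q ^ A ≠ 0 := by
        have : (q ^ A)⁻¹ - q ^ A = (1 - (q ^ A) ^ 2) / q ^ A := by field_simp
        rw [this]; exact div_ne_zero h3 hQ.ne'
      have h5 : |4 * (n : ℝ) + 1| ≠ 0 := by linarith
      generalize q ^ A = Q at *
      have : Q⁻¹ - Q = (1 - Q ^ 2) / Q := by field_simp
      rw [this]
      field_simp
  refine ⟨-(2 * Real.sqrt 2) * ∑' p, f p, ?_, ?_⟩
  · refine hs_congr (hn.mul_left (2 * Real.pi / x)) (fun n => ?_) ?_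
    · field_simp
    · field_simp
  · refine hs_congr (hk.mul_left (-(2 * Real.sqrt 2))) (fun n => ?_) rfl
    field_simp

lemma cos_odd_nat (l : ℕ) :
    2 * Real.cos ((2 * (l : ℝ) + 1) * (Real.pi / 4)) =
      Real.sqrt 2 * (-1) ^ (l * (l + 1) / 2) := by
  rcases Nat.even_or_odd' l with ⟨j, rfl | rfl⟩
  · have h1 : 2 * j * (2 * j + 1) / 2 = 2 * (j * j) + j := by
      rw [show 2 * j * (2 * j + 1) = 2 * (2 * (j * j) + j) by ring]; omega
    have h := cos_pi_four_int j
    rw [h1, pow_add, pow_mul]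
    push_cast at h ⊢
    rw [show (2 * (2 * (j : ℝ)) + 1) = 4 * j + 1 by ring, h]
    simp
    ring
  · have h1 : (2 * j + 1) * (2 * j + 1 + 1) / 2 = 2 * (j * j + j) + (j + 1) := by
      rw [show (2 * j + 1) * (2 * j + 1 + 1) = 2 * (2 * (j * j + j) + (j + 1)) by ring]; omega
    have h := cos_pi_four_int (-((j : ℤ) + 1))
    rw [h1, pow_add, pow_mul]
    push_cast at h ⊢
    rw [show (2 * (2 * (j : ℝ) + 1) + 1) * (Real.pi / 4)
      = -((4 * (-1 + -(j : ℝ)) + 1) * (Real.pi / 4)) by ring, Real.cos_neg]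
    rw [show -((j : ℝ) + 1) = -1 + - j by ring] at h
    rw [h, zpow_neg, ← inv_zpow]
    norm_num
    rw [zpow_add_one₀ (by norm_num), zpow_natCast, pow_succ]
    ring

lemma summable_q_sq (q : ℝ) (hq0 : 0 < q) (hq1 : q < 1) :
    Summable (fun n : ℤ => q ^ (n ^ 2)) := by
  have s : Summable (fun n : ℕ => q ^ n) := summable_geometric_of_lt_one hq0.le hq1
  have key : ∀ n : ℤ, q ^ (n ^ 2) = q ^ (n.natAbs ^ 2) := by
    intro n
    rw [← Int.natAbs_sq n, ← zpow_natCast]; push_cast; rfl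
  have hle : ∀ n : ℤ, q ^ (n ^ 2) ≤ q ^ n.natAbs := by
    intro n
    rw [key]
    apply pow_le_pow_of_le_one hq0.le hq1.le
    nlinarith [Nat.le_self_pow (n := 2) (by norm_num) n.natAbs]
  refine Summable.of_nonneg_of_le (fun n => by positivity) hle ?_
  apply Summable.of_nat_of_neg <;> simpa using s

lemma hasSum_even (q : ℝ) (hq0 : 0 < q) (hq1 : q < 1) :
    HasSum (fun n : ℤ => if Even n then q ^ (n ^ 2) * Real.cos (n * (Real.pi / 4)) else 0)
      (phi (-(q ^ 16))) := by
  have inj : Function.Injective (fun m : ℤ => 4 * m) := fun a b h => by simpa using h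
  rw [← inj.hasSum_iff]
  · have hterm : ∀ j : ℤ, (-(q ^ 16)) ^ (j ^ 2) = (-1) ^ j * (q ^ 16) ^ (j ^ 2) := by
      intro j
      rw [neg_eq_neg_one_mul, mul_zpow]
      congr 1
      rcases Int.even_or_odd j with h | h
      · rw [h.neg_one_zpow, Even.neg_one_zpow]
        exact (Int.even_pow' (by norm_num)).mpr h
      · rw [h.neg_one_zpow, Odd.neg_one_zpow]
        exact h.pow
    have hs : Summable (fun j : ℤ => (-(q ^ 16)) ^ (j ^ 2)) := by
      refine Summable.of_norm_bounded (summable_q_sq (q ^ 16) (by positivity)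
        (pow_lt_one₀ hq0.le hq1 (by norm_num))) (fun j => ?_)
      rw [hterm, norm_mul, norm_zpow, norm_neg, norm_one, one_zpow, one_mul,
        Real.norm_of_nonneg (by positivity)]
    refine hs_congr hs.hasSum (fun j => ?_) rfl
    have he : Even (4 * j) := ⟨2 * j, by ring⟩
    simp only [Function.comp, he, if_true]
    rw [hterm]
    push_cast
    rw [show (4 * (j : ℝ)) * (Real.pi / 4) = j * Real.pi by ring, Real.cos_int_mul_pi]
    rw [show (4 * j) ^ 2 = 16 * j ^ 2 by ring, zpow_mul]
    rw [mul_comm]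
    rfl
  · intro n hn
    split_ifs with he
    · obtain ⟨k, rfl⟩ := he
      rcases Int.even_or_odd' k with ⟨j, rfl | rfl⟩
      · exact absurd ⟨j, by simp only; ring⟩ hn
      · have : Real.cos (((2 * j + 1 + (2 * j + 1) : ℤ) : ℝ) * (Real.pi / 4)) = 0 := by
          rw [Real.cos_eq_zero_iff]
          exact ⟨j, by push_cast; ring⟩
        rw [this, mul_zero]
    · rfl

lemma hasSum_odd (q : ℝ) (hq0 : 0 < q) (hq1 : q < 1) :
    HasSum (fun n : ℤ => if Even n then 0 else q ^ (n ^ 2) * Real.cos (n * (Real.pi / 4)))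
      (Real.sqrt 2 * q * psi (-(q ^ 8))) := by
  have inj : Function.Injective (fun m : ℤ => 2 * m + 1) := fun a b h => by simpa using h
  rw [← inj.hasSum_iff]
  · have hs : Summable (fun l : ℕ => (-(q ^ 8)) ^ (l * (l + 1) / 2)) := by
      have s : Summable (fun n : ℕ => (q ^ 8) ^ n) :=
        summable_geometric_of_lt_one (by positivity) (pow_lt_one₀ hq0.le hq1 (by norm_num))
      refine Summable.of_norm_bounded s (fun j => ?_)
      rw [norm_pow, norm_neg, Real.norm_of_nonneg (by positivity)]
      apply pow_le_pow_of_le_one (by positivity) (pow_lt_one₀ hq0.le hq1 (by norm_num)).le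
      rw [Nat.le_div_iff_mul_le (by norm_num)]
      rcases j with _ | j
      · simp
      · nlinarith
    have h1 : HasSum (fun l : ℕ => q ^ ((2 * (l : ℤ) + 1) ^ 2) *
        Real.cos ((2 * (l : ℝ) + 1) * (Real.pi / 4)))
        (Real.sqrt 2 * q * psi (-(q ^ 8)) / 2) := by
      refine hs_congr (hs.hasSum.mul_left (Real.sqrt 2 * q / 2)) (fun l => ?_) ?_
      · have h := cos_odd_nat l
        rw [neg_pow]
        have e : q ^ ((2 * (l : ℤ) + 1) ^ 2) = q * (q ^ 8) ^ (l * (l + 1) / 2) := by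
          have h2 : 2 * (l * (l + 1) / 2) = l * (l + 1) :=
            Nat.mul_div_cancel' (Nat.even_mul_succ_self l).two_dvd
          rw [← pow_mul, ← pow_succ', ← zpow_natCast]
          congr 1
          zify at h2
          push_cast
          linear_combination (-4) * h2
        rw [e]
        linear_combination (q * (q ^ 8) ^ (l * (l + 1) / 2) / 2) * h
      · rw [psi]; ring
    have hodd : ∀ m : ℤ, ¬ Even (2 * m + 1) := fun m => by
      rw [Int.not_even_iff_odd]; exact ⟨m, rfl⟩
    have h2 := HasSum.of_nat_of_neg_add_one
      (f := (fun n : ℤ => if Even n then 0 else q ^ (n ^ 2) * Real.cos (n * (Real.pi / 4)))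
        ∘ (fun m : ℤ => 2 * m + 1)) (m := Real.sqrt 2 * q * psi (-(q ^ 8)) / 2)
        (m' := Real.sqrt 2 * q * psi (-(q ^ 8)) / 2)
      (hs_congr h1 (fun l => by
        simp only [Function.comp, hodd, if_false]
        push_cast; rfl) rfl)
      (hs_congr h1 (fun l => by
        simp only [Function.comp, hodd, if_false]
        rw [show (2 * -((l : ℤ) + 1) + 1) = -(2 * (l : ℤ) + 1) by ring, neg_sq]
        push_cast
        rw [← Real.cos_neg]
        congr 2; ring) rfl)
    rwa [add_halves] at h2
  · intro n hn
    rw [if_pos]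
    by_contra h
    rw [Int.not_even_iff_odd] at h
    obtain ⟨k, rfl⟩ := h
    exact hn ⟨k, rfl⟩

lemma theta_plus (q : ℝ) (hq0 : 0 < q) (hq1 : q < 1) :
    HasSum (fun n : ℤ => q ^ (n ^ 2) * Real.cos (n * (Real.pi / 4)))
      (phi (-(q ^ 16)) + Real.sqrt 2 * q * psi (-(q ^ 8))) := by
  refine hs_congr ((hasSum_even q hq0 hq1).add (hasSum_odd q hq0 hq1)) (fun n => ?_) rfl
  split_ifs <;> simp

lemma theta_minus (q : ℝ) (hq0 : 0 < q) (hq1 : q < 1) :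
    HasSum (fun n : ℤ => q ^ (n ^ 2) * Real.cos (n * (3 * Real.pi / 4)))
      (phi (-(q ^ 16)) - Real.sqrt 2 * q * psi (-(q ^ 8))) := by
  refine hs_congr ((hasSum_even q hq0 hq1).sub (hasSum_odd q hq0 hq1)) (fun n => ?_) rfl
  rw [cos_three_pi_four]
  split_ifs with h
  · rw [h.neg_one_zpow]; ring
  · rw [(Int.not_even_iff_odd.mp h).neg_one_zpow]; ring

/-- `D p k = ∏_{j=1}^k (1 - p^j)`. -/
noncomputable def qD (p : ℝ) (k : ℕ) : ℝ := ∏ j ∈ Finset.range k, (1 - p ^ (j + 1))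

/-- Reciprocal of `qD`, extended by zero to negative integers. -/
noncomputable def qE (p : ℝ) (k : ℤ) : ℝ := if 0 ≤ k then (qD p k.toNat)⁻¹ else 0

lemma qD_pos (p : ℝ) (hp0 : 0 < p) (hp1 : p < 1) (k : ℕ) : 0 < qD p k := by
  apply Finset.prod_pos
  intro j _
  have := pow_lt_one₀ hp0.le hp1 (Nat.succ_ne_zero j)
  simp only [Nat.succ_eq_add_one] at this
  linarith

lemma qD_succ (p : ℝ) (k : ℕ) : qD p (k + 1) = qD p k * (1 - p ^ (k + 1)) :=
  Finset.prod_range_succ _ _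

lemma qE_pred (p : ℝ) (hp0 : 0 < p) (hp1 : p < 1) (k : ℤ) :
    qE p (k - 1) = (1 - p ^ k) * qE p k := by
  rcases lt_trichotomy k 0 with h | h | h
  · rw [qE, qE, if_neg (by omega), if_neg (by omega), mul_zero]
  · subst h; simp [qE]
  · obtain ⟨m, rfl⟩ : ∃ m : ℕ, k = m + 1 := ⟨(k - 1).toNat, by omega⟩
    rw [qE, qE, if_pos (by omega), if_pos (by omega)]
    rw [show ((m : ℤ) + 1 - 1).toNat = m by omega, show ((m : ℤ) + 1).toNat = m + 1 by omega]
    have h1 := qD_pos p hp0 hp1 m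
    have h2 := qD_pos p hp0 hp1 (m + 1)
    rw [show (p ^ ((m : ℤ) + 1)) = p ^ (m + 1) by exact_mod_cast zpow_natCast p (m + 1)]
    rw [qD_succ] at h2 ⊢
    have h3 : 1 - p ^ (m + 1) ≠ 0 := fun h => by simp [h] at h2
    field_simp

/-- Coefficients in the finite Jacobi triple product. -/
noncomputable def jc (p : ℝ) (N : ℕ) (n : ℤ) : ℝ := qD p (2 * N) * qE p (N - n) * qE p (N + n)

lemma jc_rec (p : ℝ) (hp0 : 0 < p) (hp1 : p < 1) (N : ℕ) (n : ℤ) :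
    jc p (N + 1) n = (1 + p ^ (2 * N + 1)) * jc p N n
      + p ^ ((N : ℤ) - n + 1) * jc p N (n - 1) + p ^ ((N : ℤ) + n + 1) * jc p N (n + 1) := by
  have hE := qE_pred p hp0 hp1
  simp only [jc]
  rw [show 2 * (N + 1) = 2 * N + 1 + 1 by ring, qD_succ, qD_succ]
  push_cast
  obtain ⟨u, hu⟩ : ∃ u : ℤ, u = (N : ℤ) - n := ⟨_, rfl⟩
  obtain ⟨v, hv⟩ : ∃ v : ℤ, v = (N : ℤ) + n := ⟨_, rfl⟩
  rw [show (N : ℤ) + 1 - n = u + 1 by omega, show (N : ℤ) + 1 + n = v + 1 by omega,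
    show (N : ℤ) - (n - 1) = u + 1 by omega, show (N : ℤ) + (n - 1) = v - 1 by omega,
    show (N : ℤ) - (n + 1) = u - 1 by omega, show (N : ℤ) + (n + 1) = v + 1 by omega,
    ← hu, ← hv]
  have eu : qE p u = (1 - p ^ (u + 1)) * qE p (u + 1) := by
    have := hE (u + 1); rwa [add_sub_cancel_right] at this
  have ev : qE p v = (1 - p ^ (v + 1)) * qE p (v + 1) := by
    have := hE (v + 1); rwa [add_sub_cancel_right] at this
  rw [hE u, hE v, eu, ev]
  have hXY : p ^ (2 * N) = p ^ u * p ^ v := by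
    rw [← zpow_add₀ hp0.ne', ← zpow_natCast]; congr 1; push_cast; omega
  rw [pow_succ p (2 * N + 1), pow_succ p (2 * N), hXY, zpow_add_one₀ hp0.ne',
    zpow_add_one₀ hp0.ne']
  ring

lemma finite_jtp (q : ℝ) (hq0 : 0 < q) (hq1 : q < 1) (c : ℝ) (N : ℕ) :
    ∀ t : ℤ → ℝ, (∀ n, t (n + 1) + t (n - 1) = 2 * c * t n) →
    HasSum (fun n : ℤ => jc (q ^ 2) N n * q ^ (n ^ 2) * t n)
      ((∏ k ∈ Finset.range N, (1 + 2 * c * q ^ (2 * k + 1) + (q ^ (2 * k + 1)) ^ 2)) * t 0) := by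
  have hp0 : 0 < q ^ 2 := by positivity
  have hp1 : q ^ 2 < 1 := pow_lt_one₀ hq0.le hq1 (by norm_num)
  induction N with
  | zero =>
    intro t ht
    refine hs_congr (hasSum_single (f := fun n : ℤ => jc (q ^ 2) 0 n * q ^ (n ^ 2) * t n) 0 ?_)
      (fun n => rfl) ?_
    · intro n hn
      have : jc (q ^ 2) 0 n = 0 := by
        simp only [jc, qE]
        rcases lt_or_gt_of_ne hn with h | h
        · rw [if_neg (c := 0 ≤ ((0 : ℕ) : ℤ) + n) (by push_cast; omega), mul_zero]
        · rw [if_neg (c := 0 ≤ ((0 : ℕ) : ℤ) - n) (by push_cast; omega), mul_zero, zero_mul]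
      rw [this]; ring
    · simp [jc, qE, qD]
  | succ N ih =>
    intro t ht
    have h0 := ih t ht
    have hp := ih (fun n => t (n + 1)) (fun n => by
      have := ht (n + 1)
      rw [show n - 1 + 1 = n + 1 - 1 by ring]; exact this)
    have hm := ih (fun n => t (n - 1)) (fun n => by
      have := ht (n - 1)
      rw [show n + 1 - 1 = n - 1 + 1 by ring]; exact this)
    have hp' := (Equiv.subRight (1 : ℤ)).hasSum_iff.mpr hp
    have hm' := (Equiv.addRight (1 : ℤ)).hasSum_iff.mpr hm
    set r := q ^ (2 * N + 1) with hr
    have hfin := ((h0.mul_left (1 + r ^ 2)).add (hp'.mul_left r)).add (hm'.mul_left r)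
    refine hs_congr hfin (fun n => ?_) ?_
    · simp only [Function.comp, Equiv.subRight_apply, Equiv.coe_addRight, sub_add_cancel,
        add_sub_cancel_right]
      rw [jc_rec _ hp0 hp1]
      have e0 : (q ^ 2) ^ (2 * N + 1) = r ^ 2 := by rw [hr]; ring
      have e1 : (q ^ 2) ^ ((N : ℤ) - n + 1) * q ^ (n ^ 2) = r * q ^ ((n - 1) ^ 2) := by
        rw [hr, ← zpow_natCast q 2, ← zpow_mul, ← zpow_natCast, ← zpow_add₀ hq0.ne',
          ← zpow_add₀ hq0.ne']
        congr 1; push_cast; ring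
      have e2 : (q ^ 2) ^ ((N : ℤ) + n + 1) * q ^ (n ^ 2) = r * q ^ ((n + 1) ^ 2) := by
        rw [hr, ← zpow_natCast q 2, ← zpow_mul, ← zpow_natCast, ← zpow_add₀ hq0.ne',
          ← zpow_add₀ hq0.ne']
        congr 1; push_cast; ring
      rw [e0]
      linear_combination jc (q ^ 2) N (n - 1) * t n * e1 + jc (q ^ 2) N (n + 1) * t n * e2
    · have := ht 0
      simp only [zero_add, zero_sub] at this ⊢
      rw [Finset.prod_range_succ, ← hr]
      linear_combination (-(∏ k ∈ Finset.range N,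
        (1 + 2 * c * q ^ (2 * k + 1) + (q ^ (2 * k + 1)) ^ 2)) * r) * this

lemma qD_lim (p : ℝ) (hp0 : 0 < p) (hp1 : p < 1) :
    ∃ D : ℝ, 0 < D ∧ Tendsto (qD p) atTop (nhds D) ∧ (∀ k, D ≤ qD p k) ∧ ∀ k, qD p k ≤ 1 := by
  have hlt : ∀ j : ℕ, p ^ (j + 1) < 1 := fun j => pow_lt_one₀ hp0.le hp1 (Nat.succ_ne_zero j)
  have hs : Summable (fun j : ℕ => -p ^ (j + 1)) :=
    ((summable_nat_add_iff 1).mpr (summable_geometric_of_lt_one hp0.le hp1)).neg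
  have hl := (Real.summable_log_one_add_of_summable hs).hasSum.tendsto_sum_nat
  have hexp := (Real.continuous_exp.tendsto _).comp hl
  have heq : (Real.exp ∘ fun n => ∑ i ∈ Finset.range n, Real.log (1 + -p ^ (i + 1))) = qD p := by
    funext n
    simp only [Function.comp, Real.exp_sum, qD]
    refine Finset.prod_congr rfl (fun j _ => ?_)
    rw [Real.exp_log (by linarith [hlt j])]; ring
  rw [heq] at hexp
  have hanti : Antitone (qD p) := antitone_nat_of_succ_le (fun n => by
    rw [qD_succ]
    have := qD_pos p hp0 hp1 n
    have : 0 < p ^ (n + 1) := by positivity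
    nlinarith)
  refine ⟨_, Real.exp_pos _, hexp, fun k => hanti.le_of_tendsto hexp k, fun k => ?_⟩
  simpa [qD] using hanti (Nat.zero_le k)

lemma toNat_tendsto : Tendsto Int.toNat atTop atTop := by
  refine tendsto_atTop.mpr (fun b => ?_)
  filter_upwards [eventually_ge_atTop (b : ℤ)] with k hk
  omega

lemma jtp_lim (q : ℝ) (hq0 : 0 < q) (hq1 : q < 1) :
    ∃ D : ℝ, 0 < D ∧ ∀ (θ T : ℝ), HasSum (fun n : ℤ => q ^ (n ^ 2) * Real.cos (n * θ)) T →
      Tendsto (fun N : ℕ => ∏ k ∈ Finset.range N,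
        (1 + 2 * Real.cos θ * q ^ (2 * k + 1) + (q ^ (2 * k + 1)) ^ 2)) atTop (nhds (D⁻¹ * T)) := by
  have hp0 : 0 < q ^ 2 := by positivity
  have hp1 : q ^ 2 < 1 := pow_lt_one₀ hq0.le hq1 (by norm_num)
  obtain ⟨D, hD, hlim, hle, hone⟩ := qD_lim (q ^ 2) hp0 hp1
  refine ⟨D, hD, fun θ T hT => ?_⟩
  have hE : Tendsto (qE (q ^ 2)) atTop (nhds D⁻¹) := by
    have h1 : Tendsto (fun k : ℤ => (qD (q ^ 2) k.toNat)⁻¹) atTop (nhds D⁻¹) :=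
      (hlim.comp toNat_tendsto).inv₀ hD.ne'
    refine h1.congr' ?_
    filter_upwards [eventually_ge_atTop 0] with k hk
    rw [qE, if_pos hk]
  have hEb : ∀ k, 0 ≤ qE (q ^ 2) k ∧ qE (q ^ 2) k ≤ D⁻¹ := by
    intro k
    rw [qE]
    split_ifs
    · exact ⟨(inv_pos.mpr (qD_pos _ hp0 hp1 _)).le, inv_anti₀ hD (hle _)⟩
    · exact ⟨le_rfl, (inv_pos.mpr hD).le⟩
  have hcast : Tendsto (fun N : ℕ => (N : ℤ)) atTop atTop := tendsto_natCast_atTop_atTop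
  have key := tendsto_tsum_of_dominated_convergence (𝓕 := atTop)
    (f := fun (N : ℕ) (n : ℤ) => jc (q ^ 2) N n * q ^ (n ^ 2) * Real.cos (n * θ))
    (g := fun n : ℤ => D⁻¹ * (q ^ (n ^ 2) * Real.cos (n * θ)))
    (bound := fun n : ℤ => D⁻¹ * D⁻¹ * q ^ (n ^ 2))
    ((summable_q_sq q hq0 hq1).mul_left _)
    (by
      intro n
      have h1 : Tendsto (fun N : ℕ => qE (q ^ 2) ((N : ℤ) - n)) atTop (nhds D⁻¹) :=
        hE.comp (tendsto_atTop_add_const_right _ (-n) hcast)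
      have h2 : Tendsto (fun N : ℕ => qE (q ^ 2) ((N : ℤ) + n)) atTop (nhds D⁻¹) :=
        hE.comp (tendsto_atTop_add_const_right _ n hcast)
      have h3 : Tendsto (fun N : ℕ => qD (q ^ 2) (2 * N)) atTop (nhds D) :=
        hlim.comp (tendsto_id.const_mul_atTop' (by norm_num))
      have h4 := (((h3.mul h1).mul h2).mul_const (q ^ (n ^ 2))).mul_const (Real.cos (n * θ))
      rw [mul_inv_cancel₀ hD.ne', one_mul, mul_assoc] at h4
      exact h4)
    (by
      refine Eventually.of_forall (fun N n => ?_)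
      have b1 := hEb ((N : ℤ) - n)
      have b2 := hEb ((N : ℤ) + n)
      have b3 := hone (2 * N)
      have b4 := qD_pos (q ^ 2) hp0 hp1 (2 * N)
      have hj0 : 0 ≤ jc (q ^ 2) N n := mul_nonneg (mul_nonneg b4.le b1.1) b2.1
      have hj1 : jc (q ^ 2) N n ≤ D⁻¹ * D⁻¹ := by
        have : jc (q ^ 2) N n ≤ 1 * D⁻¹ * D⁻¹ := by
          apply mul_le_mul _ b2.2 b2.1 (by positivity)
          exact mul_le_mul b3 b1.2 b1.1 (by norm_num)
        simpa using this
      rw [norm_mul, norm_mul, Real.norm_of_nonneg hj0,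
        Real.norm_of_nonneg (by positivity : 0 ≤ q ^ (n ^ 2)), Real.norm_eq_abs]
      have hc := Real.abs_cos_le_one (n * θ)
      calc jc (q ^ 2) N n * q ^ (n ^ 2) * |Real.cos (n * θ)|
          ≤ jc (q ^ 2) N n * q ^ (n ^ 2) * 1 :=
            mul_le_mul_of_nonneg_left hc (mul_nonneg hj0 (by positivity))
        _ ≤ D⁻¹ * D⁻¹ * q ^ (n ^ 2) := by
            rw [mul_one]; exact mul_le_mul_of_nonneg_right hj1 (by positivity))
  rw [(hT.mul_left D⁻¹).tsum_eq] at key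
  refine key.congr (fun N => ?_)
  have := finite_jtp q hq0 hq1 (Real.cos θ) N (fun n => Real.cos (n * θ)) (fun n => by
    push_cast
    rw [add_mul, sub_mul, one_mul, Real.cos_add, Real.cos_sub]; ring)
  rw [this.tsum_eq]
  simp

/-- For real `x > 0`, with `q = e^{-π/x}`,
`F_{(4,1)}(x) = -(π/(√2 x)) log((φ(-q¹⁶) - √2 q ψ(-q⁸))/(φ(-q¹⁶) + √2 q ψ(-q⁸)))`. -/
theorem F41_theta_form (x : ℝ) (hx : 0 < x) (q : ℝ)
    (hq : q = Real.exp (-Real.pi / x)) :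
    Tendsto (fun N : ℕ => ∑ n ∈ Finset.Ioo (-(N : ℤ)) (N : ℤ),
        ∑' m : ℤ, (-1 : ℝ) ^ (m + n) / ((x * m) ^ 2 + (4 * (n : ℝ) + 1) ^ 2))
      atTop
      (nhds (-(Real.pi / (Real.sqrt 2 * x)) *
        Real.log ((phi (-(q ^ 16)) - Real.sqrt 2 * q * psi (-(q ^ 8)))
          / (phi (-(q ^ 16)) + Real.sqrt 2 * q * psi (-(q ^ 8)))))) := by
  have hq0 : 0 < q := by rw [hq]; positivity
  have hq1 : q < 1 := by
    rw [hq, Real.exp_lt_one_iff]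
    rw [neg_div]; simp; positivity
  obtain ⟨S, hF, hS⟩ := double_sum x hx q hq
  obtain ⟨D, hD, hJ⟩ := jtp_lim q hq0 hq1
  have hA := hJ _ _ (theta_plus q hq0 hq1)
  have hB := hJ _ _ (theta_minus q hq0 hq1)
  set A := phi (-(q ^ 16)) + Real.sqrt 2 * q * psi (-(q ^ 8))
  set B := phi (-(q ^ 16)) - Real.sqrt 2 * q * psi (-(q ^ 8))
  have hc3 : Real.cos (3 * Real.pi / 4) = - (Real.sqrt 2 / 2) := by
    have := cos_three_pi_four 1
    simpa using this
  rw [Real.cos_pi_div_four] at hA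
  rw [hc3] at hB
  have hApos : 0 < A := by
    have h1 : 1 ≤ D⁻¹ * A := ge_of_tendsto hA (Eventually.of_forall (fun N => by
      refine Finset.prod_induction _ (fun r : ℝ => 1 ≤ r)
        (fun a b ha hb => one_le_mul_of_one_le_of_one_le ha hb) le_rfl ?_
      intro k _
      have : 0 ≤ 2 * (Real.sqrt 2 / 2) * q ^ (2 * k + 1) + (q ^ (2 * k + 1)) ^ 2 := by positivity
      linarith))
    have h2 : 0 < D⁻¹ * A := by linarith
    exact (mul_pos_iff_of_pos_left (inv_pos.mpr hD)).mp h2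
  have hlim := hB.div hA (mul_pos (inv_pos.mpr hD) hApos).ne'
  have hlim2 := (Real.continuous_exp.tendsto _).comp hS.tendsto_sum_nat
  have h2 : Real.sqrt 2 ^ 2 = 2 := Real.sq_sqrt (by norm_num)
  have heq : D⁻¹ * B / (D⁻¹ * A) = Real.exp S := by
    refine tendsto_nhds_unique hlim (hlim2.congr (fun N => ?_))
    simp only [Function.comp, Real.exp_sum, Pi.div_apply]
    rw [← Finset.prod_div_distrib]
    refine Finset.prod_congr rfl (fun k _ => ?_)
    have hy : 0 < q ^ (2 * k + 1) := by positivity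
    generalize q ^ (2 * k + 1) = y at hy
    have n1 : 0 < 1 - Real.sqrt 2 * y + y ^ 2 := by
      nlinarith [sq_nonneg (y - Real.sqrt 2 / 2)]
    rw [Real.exp_log (div_pos n1 (by positivity))]
    congr 1 <;> ring
  rw [mul_div_mul_left _ _ (inv_pos.mpr hD).ne'] at heq
  rw [heq, Real.log_exp]
  refine Tendsto.comp (g := fun s : Finset ℤ => ∑ n ∈ s,
        ∑' m : ℤ, (-1 : ℝ) ^ (m + n) / ((x * m) ^ 2 + (4 * (n : ℝ) + 1) ^ 2)) hF ?_
  apply tendsto_atTop_finset_of_monotone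
  · intro a b hab
    apply Finset.Ioo_subset_Ioo <;> simp <;> omega
  · intro n
    exact ⟨n.natAbs + 1, by rw [Finset.mem_Ioo]; omega⟩
end
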